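/- arXiv:1311.1625 — 2 statements merged into one kernel-verified Lean document; each statement's English description precedes it below -/
import Mathlib

section
/- Let P ⊂ ℝ^n be a smooth full-dimensional lattice polytope. Then cd(P) ≥ (n+3)/2 if and only if P is unimodularly equivalent to a Cayley sum Cayley(R_0, …, R_t)_π of normally equivalent smooth lattice polytopes with t + 1 = cd(P) and t > n/2. -/
noncomputable section

open MeasureTheory Pointwise

/-- A point of `ℝ^n` is a lattice point if all its coordinates are integers. -/
def IsLatticePt {n : ℕ} (x : Fin n → ℝ) : Prop := ∀ i, ∃ z : ℤ, x i = (z : ℝ)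

/-- A lattice polytope is the convex hull of a finite set of lattice points. -/
def IsLatticePolytope {n : ℕ} (P : Set (Fin n → ℝ)) : Prop :=
  ∃ V : Finset (Fin n → ℝ), (∀ v ∈ V, IsLatticePt v) ∧
    P = convexHull ℝ (↑V : Set (Fin n → ℝ))

/-- A rational polytope is the convex hull of a finite set of rational points. -/
def IsRatPolytope {n : ℕ} (P : Set (Fin n → ℝ)) : Prop :=
  ∃ V : Finset (Fin n → ℝ), (∀ v ∈ V, ∀ i, ∃ q : ℚ, v i = (q : ℝ)) ∧
    P = convexHull ℝ (↑V : Set (Fin n → ℝ))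

/-- The vertices `0, e_1, …, e_t` of the standard unimodular simplex `Δ_t ⊆ ℝ^t`. -/
def stdSimplexVert (t : ℕ) (k : Fin (t + 1)) : Fin t → ℝ :=
  fun j => if (k : ℕ) = (j : ℕ) + 1 then 1 else 0

/-- The standard unimodular simplex `Δ_t = conv(0, e_1, …, e_t) ⊆ ℝ^t`. -/
def unimodSimplex (t : ℕ) : Set (Fin t → ℝ) := convexHull ℝ (Set.range (stdSimplexVert t))

/-- The interior of the dilate `s • P` contains a lattice point. -/
def HasInteriorLatticePt {n : ℕ} (P : Set (Fin n → ℝ)) (s : ℕ) : Prop :=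
  ∃ x ∈ interior ((s : ℝ) • P), IsLatticePt x

/-- The codegree `cd(P)`: the least positive integer `t` such that the interior of `t • P`
contains a lattice point. -/
def codeg {n : ℕ} (P : Set (Fin n → ℝ)) : ℕ :=
  sInf {t : ℕ | 0 < t ∧ HasInteriorLatticePt P t}

/-- Pairing of an integer vector with a real vector. -/
def iprod {n : ℕ} (a : Fin n → ℤ) (x : Fin n → ℝ) : ℝ := ∑ i, (a i : ℝ) * x i

/-- An integer vector is primitive if it is nonzero and its coordinates have no common
non-unit divisor. -/
def IsPrimitive {n : ℕ} (a : Fin n → ℤ) : Prop :=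
  a ≠ 0 ∧ ∀ d : ℤ, (∀ i, d ∣ a i) → IsUnit d

/-- `(a, b)` is a facet inequality of `P ⊆ ℝ^n`: `a` is a primitive integer inner normal,
`b = min_{x ∈ P} ⟨a, x⟩`, and the corresponding face has dimension `n - 1`. -/
def IsFacetIneq {n : ℕ} (P : Set (Fin n → ℝ)) (a : Fin n → ℤ) (b : ℝ) : Prop :=
  IsPrimitive a ∧ (∀ x ∈ P, b ≤ iprod a x) ∧
  {x ∈ P | iprod a x = b}.Nonempty ∧
  Module.finrank ℝ ↥(vectorSpan ℝ {x ∈ P | iprod a x = b}) = n - 1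

/-- The adjoint polytope `P^(s) = {x : ⟨a_F, x⟩ ≥ b_F + s for all facets F}`. -/
def adjointPoly {n : ℕ} (P : Set (Fin n → ℝ)) (s : ℝ) : Set (Fin n → ℝ) :=
  {x | ∀ a b, IsFacetIneq P a b → b + s ≤ iprod a x}

/-- The set `{s > 0 : P^(s) ≠ ∅}`; the ℚ-codegree is `μ(P) = (sSup (muSet P))⁻¹`. -/
def muSet {n : ℕ} (P : Set (Fin n → ℝ)) : Set ℝ :=
  {s : ℝ | 0 < s ∧ (adjointPoly P s).Nonempty}

/-- `F` is a (nonempty, exposed) face of the polytope `P`; with `u = 0` this includes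
`P` itself. -/
def IsFace {n : ℕ} (P F : Set (Fin n → ℝ)) : Prop :=
  F.Nonempty ∧ ∃ (u : (Fin n → ℝ) →ₗ[ℝ] ℝ) (c : ℝ),
    (∀ x ∈ P, c ≤ u x) ∧ F = {x ∈ P | u x = c}

/-- The dimension of a face (or polytope): the rank of its direction vector space. -/
def fdim {n : ℕ} (F : Set (Fin n → ℝ)) : ℕ := Module.finrank ℝ ↥(vectorSpan ℝ F)

/-- `vol` is the relative lattice volume of `F`: the Lebesgue volume of the image of `F`
under an affine isomorphism of `aff F` with `ℝ^{dim F}` carrying `(aff F) ∩ ℤ^n` onto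
`ℤ^{dim F}`. -/
def HasRelVol {n : ℕ} (F : Set (Fin n → ℝ)) (vol : ℝ) : Prop :=
  ∃ T : (Fin n → ℝ) →ᵃ[ℝ] (Fin (fdim F) → ℝ),
    Set.BijOn T (affineSpan ℝ F : Set (Fin n → ℝ)) Set.univ ∧
    T '' ((affineSpan ℝ F : Set (Fin n → ℝ)) ∩ {x | IsLatticePt x}) = {y | IsLatticePt y} ∧
    vol = (volume (T '' F)).toReal

/-- The alternating face sum `Σ_F (-1)^{n - dim F} (dim F + 1)! Vol(F)`. -/
def faceSum {n : ℕ} (𝓕 : Finset (Set (Fin n → ℝ))) (volf : Set (Fin n → ℝ) → ℝ) : ℝ :=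
  ∑ F ∈ 𝓕, (-1 : ℝ) ^ (n - fdim F) * (Nat.factorial (fdim F + 1) : ℝ) * volf F

/-- The alternating sum over all nonempty faces of `P` of
`(-1)^{n - dim F} (dim F + 1)! Vol(F)` vanishes. -/
def FaceSumZero {n : ℕ} (P : Set (Fin n → ℝ)) : Prop :=
  ∃ (𝓕 : Finset (Set (Fin n → ℝ))) (volf : Set (Fin n → ℝ) → ℝ),
    (∀ F, F ∈ 𝓕 ↔ IsFace P F) ∧ (∀ F ∈ 𝓕, HasRelVol F (volf F)) ∧
    faceSum 𝓕 volf = 0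

/-- A polytope `R ⊆ ℝ^n` (of dimension `d = fdim R`) is smooth: at each vertex there are
exactly `d` edges, whose primitive integer direction vectors form a ℤ-basis of the
lattice `(vectorSpan R) ∩ ℤ^n`. -/
def IsSmoothPoly {n : ℕ} (R : Set (Fin n → ℝ)) : Prop :=
  ∀ v ∈ Set.extremePoints ℝ R,
    ∃ (w : Fin (fdim R) → (Fin n → ℤ)) (c : Fin (fdim R) → ℝ),
      (∀ i, 0 < c i) ∧ (∀ i, IsPrimitive (w i)) ∧
      LinearIndependent ℝ (fun i => ((fun j => ((w i j : ℝ))) : Fin n → ℝ)) ∧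
      (∀ i, ((fun j => ((w i j : ℝ))) : Fin n → ℝ) ∈ vectorSpan ℝ R) ∧
      (∀ z : Fin n → ℤ, ((fun j => (z j : ℝ)) : Fin n → ℝ) ∈ vectorSpan ℝ R →
        ∃ m : Fin (fdim R) → ℤ,
          ((fun j => (z j : ℝ)) : Fin n → ℝ) =
            ∑ i, (m i : ℝ) • ((fun j => ((w i j : ℝ))) : Fin n → ℝ)) ∧
      (∀ F : Set (Fin n → ℝ), (IsFace R F ∧ v ∈ F ∧ fdim F = 1) ↔
        ∃ i, F = segment ℝ v (v + c i • ((fun j => ((w i j : ℝ))) : Fin n → ℝ)))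

/-- The real-linear map `ℝ^n → ℝ^t` induced by an integer matrix. -/
def matMap {t n : ℕ} (A : Matrix (Fin t) (Fin n) ℤ) : (Fin n → ℝ) → (Fin t → ℝ) :=
  fun x k => ∑ j, (A k j : ℝ) * x j

/-- The piece `R_k = P ∩ π_ℝ^{-1}(v_k)` of a Cayley sum over the `k`-th vertex of `Δ_t`. -/
def cayleyPiece {t n : ℕ} (A : Matrix (Fin t) (Fin n) ℤ) (P : Set (Fin n → ℝ))
    (k : Fin (t + 1)) : Set (Fin n → ℝ) :=
  {x ∈ P | matMap A x = stdSimplexVert t k}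

/-- Two polytopes are normally equivalent (have the same normal fan): for all linear
functionals `u, v`, the minimizing face of `u` equals that of `v` on `R` precisely when the
same holds on `S`. -/
def NormEquiv {n : ℕ} (R S : Set (Fin n → ℝ)) : Prop :=
  ∀ u v : (Fin n → ℝ) →ₗ[ℝ] ℝ,
    ({x ∈ R | ∀ y ∈ R, u x ≤ u y} = {x ∈ R | ∀ y ∈ R, v x ≤ v y}) ↔
    ({x ∈ S | ∀ y ∈ S, u x ≤ u y} = {x ∈ S | ∀ y ∈ S, v x ≤ v y})

/-- `Q` is the Cayley sum, via the surjective lattice projection `A : ℤ^n → ℤ^t`, of the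
normally equivalent polytopes `R_k = Q ∩ π_ℝ^{-1}(v_k)`: `π_ℝ` maps `Q` onto `Δ_t`. -/
def IsCayleyWith {n t : ℕ} (Q : Set (Fin n → ℝ)) (A : Matrix (Fin t) (Fin n) ℤ) : Prop :=
  (∀ y : Fin t → ℤ, ∃ x : Fin n → ℤ, A.mulVec x = y) ∧
  matMap A '' Q = unimodSimplex t ∧
  ∀ k l : Fin (t + 1), NormEquiv (cayleyPiece A Q k) (cayleyPiece A Q l)

/-- The unimodular affine map `x ↦ Ux + w`. -/
def unimodMap {n : ℕ} (U : Matrix (Fin n) (Fin n) ℤ) (w : Fin n → ℤ) :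
    (Fin n → ℝ) → (Fin n → ℝ) :=
  fun x i => (∑ j, (U i j : ℝ) * x j) + (w i : ℝ)

/-- The set `{s > 0 : P^(s) has the same normal fan as P}`; the nef value is
`τ(P) = (sSup (tauSet P))⁻¹`. -/
def tauSet {n : ℕ} (P : Set (Fin n → ℝ)) : Set ℝ :=
  {s : ℝ | 0 < s ∧ NormEquiv (adjointPoly P s) P}


/-- Real vector of an integer vector. -/
noncomputable def zc {n : ℕ} (z : Fin n → ℤ) : Fin n → ℝ := fun j => (z j : ℝ)

theorem zc_add {n : ℕ} (x y : Fin n → ℤ) : zc (x + y) = zc x + zc y := by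
  ext j; simp [zc]

theorem zc_neg {n : ℕ} (x : Fin n → ℤ) : zc (-x) = - zc x := by
  ext j; simp [zc]

theorem zc_sub {n : ℕ} (x y : Fin n → ℤ) : zc (x - y) = zc x - zc y := by
  ext j; simp [zc]

theorem zc_smul {n : ℕ} (k : ℤ) (x : Fin n → ℤ) : zc (k • x) = (k : ℝ) • zc x := by
  ext j; simp [zc]

theorem zc_zero {n : ℕ} : zc (0 : Fin n → ℤ) = 0 := by
  ext j; simp [zc]

theorem zc_inj {n : ℕ} {x y : Fin n → ℤ} (h : zc x = zc y) : x = y := by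
  ext j
  have := congrFun h j
  simpa [zc] using this

theorem iprod_zc {n : ℕ} (a z : Fin n → ℤ) : iprod a (zc z) = ((a ⬝ᵥ z : ℤ) : ℝ) := by
  simp [iprod, zc, dotProduct]

theorem iprod_add {n : ℕ} (a : Fin n → ℤ) (x y : Fin n → ℝ) :
    iprod a (x + y) = iprod a x + iprod a y := by
  simp [iprod, mul_add, Finset.sum_add_distrib]

theorem iprod_smul {n : ℕ} (a : Fin n → ℤ) (k : ℝ) (x : Fin n → ℝ) :
    iprod a (k • x) = k * iprod a x := by
  simp only [iprod, Finset.mul_sum, Pi.smul_apply, smul_eq_mul]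
  exact Finset.sum_congr rfl fun i _ => by ring

theorem iprod_sub {n : ℕ} (a : Fin n → ℤ) (x y : Fin n → ℝ) :
    iprod a (x - y) = iprod a x - iprod a y := by
  simp [iprod, mul_sub, Finset.sum_sub_distrib]

theorem iprod_zero {n : ℕ} (a : Fin n → ℤ) : iprod a (0 : Fin n → ℝ) = 0 := by
  simp [iprod]

theorem iprod_sum_right {n : ℕ} {ι : Type*} (s : Finset ι) (a : Fin n → ℤ) (x : ι → Fin n → ℝ) :
    iprod a (∑ i ∈ s, x i) = ∑ i ∈ s, iprod a (x i) := by
  classical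
  induction s using Finset.induction_on with
  | empty => simp [iprod_zero]
  | insert i s hi ih => rw [Finset.sum_insert hi, Finset.sum_insert hi, iprod_add, ih]

theorem iprod_smul_left {n : ℕ} (a : Fin n → ℤ) (k : ℤ) (x : Fin n → ℝ) :
    iprod (k • a) x = k * iprod a x := by
  simp only [iprod, Finset.mul_sum, Pi.smul_apply, smul_eq_mul]
  exact Finset.sum_congr rfl fun i _ => by push_cast; ring

theorem iprod_neg_left {n : ℕ} (a : Fin n → ℤ) (x : Fin n → ℝ) :
    iprod (-a) x = - iprod a x := by
  simp [iprod]

theorem iprod_add_left {n : ℕ} (a b : Fin n → ℤ) (x : Fin n → ℝ) :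
    iprod (a + b) x = iprod a x + iprod b x := by
  simp [iprod, add_mul, Finset.sum_add_distrib]

theorem iprod_sum_left {n : ℕ} {ι : Type*} (s : Finset ι) (a : ι → Fin n → ℤ) (x : Fin n → ℝ) :
    iprod (∑ i ∈ s, a i) x = ∑ i ∈ s, iprod (a i) x := by
  classical
  induction s using Finset.induction_on with
  | empty => simp [iprod]
  | insert i s hi ih => rw [Finset.sum_insert hi, Finset.sum_insert hi, iprod_add_left, ih]

/-- Vertex data of a smooth full-dimensional polytope at the lattice vertex `v`. -/
structure VD {n : ℕ} (P : Set (Fin n → ℝ)) (v : Fin n → ℤ) (w a : Fin n → Fin n → ℤ)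
    (l : Fin n → ℤ) : Prop where
  ext : zc v ∈ Set.extremePoints ℝ P
  dual : ∀ i j, a i ⬝ᵥ w j = if i = j then 1 else 0
  nonneg : ∀ x ∈ P, ∀ i, ((a i ⬝ᵥ v : ℤ) : ℝ) ≤ iprod (a i) x
  step : ∀ i, zc (v + w i) ∈ P
  lpos : ∀ i, 1 ≤ l i
  nbr : ∀ i, zc (v + l i • w i) ∈ Set.extremePoints ℝ P
  edge : ∀ F : Set (Fin n → ℝ), (IsFace P F ∧ zc v ∈ F ∧ fdim F = 1) ↔
        ∃ i, F = segment ℝ (zc v) (zc (v + l i • w i))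

/-- Integral facet inequality `a x + b ≥ 0`. -/
structure IsFac {n : ℕ} (P : Set (Fin n → ℝ)) (a : Fin n → ℤ) (b : ℤ) : Prop where
  nonneg : ∀ x ∈ P, 0 ≤ iprod a x + b
  prim : ∃ z : Fin n → ℤ, a ⬝ᵥ z = 1
  uniq : ∀ (r : Fin n → ℤ) (d : ℤ), (∀ x ∈ P, iprod a x + b = 0 → iprod r x + d = 0) →
    ∃ m : ℤ, r = m • a ∧ d = m * b

theorem IsFac.nonneg_int {n : ℕ} {P : Set (Fin n → ℝ)} {a : Fin n → ℤ} {b : ℤ}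
    (h : IsFac P a b) {z : Fin n → ℤ} (hz : zc z ∈ P) : 0 ≤ a ⬝ᵥ z + b := by
  have := h.nonneg _ hz
  rw [iprod_zc] at this
  exact_mod_cast this

theorem dual_expand {n : ℕ} {w a : Fin n → Fin n → ℤ}
    (h : ∀ i j, a i ⬝ᵥ w j = if i = j then 1 else 0) (j k : Fin n) :
    ∑ i, w i j * a i k = if j = k then 1 else 0 := by
  have h1 : (Matrix.of a) * (Matrix.of w).transpose = 1 := by
    ext i j
    simp only [Matrix.mul_apply, Matrix.transpose_apply, Matrix.of_apply, Matrix.one_apply]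
    exact h i j
  have h2 := mul_eq_one_comm.mp h1
  have h3 := congrFun (congrFun h2 j) k
  simpa [Matrix.mul_apply, Matrix.one_apply] using h3

theorem VD.expand_int {n : ℕ} {w a : Fin n → Fin n → ℤ}
    (h : ∀ i j, a i ⬝ᵥ w j = if i = j then 1 else 0) (z : Fin n → ℤ) :
    z = ∑ i, (a i ⬝ᵥ z) • w i := by
  ext j
  have h1 := dual_expand h j
  simp only [Finset.sum_apply, Pi.smul_apply, smul_eq_mul, dotProduct, Finset.sum_mul]
  rw [Finset.sum_comm]
  have : ∀ k, ∑ i, a i k * z k * w i j = (if j = k then 1 else 0) * z k := by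
    intro k
    rw [← h1 k, Finset.sum_mul]
    exact Finset.sum_congr rfl fun i _ => by ring
  simp [this]

theorem VD.expand_real {n : ℕ} {w a : Fin n → Fin n → ℤ}
    (h : ∀ i j, a i ⬝ᵥ w j = if i = j then 1 else 0) (x : Fin n → ℝ) :
    x = ∑ i, (iprod (a i) x) • zc (w i) := by
  ext j
  have h1 := dual_expand h j
  simp only [Finset.sum_apply, Pi.smul_apply, smul_eq_mul, iprod, Finset.sum_mul, zc]
  rw [Finset.sum_comm]
  have : ∀ k, ∑ i, (a i k : ℝ) * x k * (w i j : ℝ) = (if j = k then 1 else 0) * x k := by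
    intro k
    have h2 : ((∑ i, w i j * a i k : ℤ) : ℝ) = if j = k then 1 else 0 := by
      rw [h1 k]; split_ifs <;> simp
    rw [← h2]
    push_cast
    rw [Finset.sum_mul]
    exact Finset.sum_congr rfl fun i _ => by ring
  simp [this]

/-- expansion of an integer functional in the dual basis -/
theorem VD.expand_dual {n : ℕ} {w a : Fin n → Fin n → ℤ}
    (h : ∀ i j, a i ⬝ᵥ w j = if i = j then 1 else 0) (r : Fin n → ℤ) :
    r = ∑ i, (r ⬝ᵥ w i) • a i := by
  have h' : ∀ i j, w i ⬝ᵥ a j = if i = j then 1 else 0 := by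
    intro i j
    rw [dotProduct_comm, h j i]
    simp [eq_comm]
  have := VD.expand_int h' r
  simpa [dotProduct_comm] using this

theorem VD.mem {n : ℕ} {P : Set (Fin n → ℝ)} {v : Fin n → ℤ} {w a : Fin n → Fin n → ℤ}
    {l : Fin n → ℤ} (h : VD P v w a l) : zc v ∈ P := h.ext.1

/-- The dual basis elements at a vertex are facets. -/
theorem VD.isFac {n : ℕ} {P : Set (Fin n → ℝ)} {v : Fin n → ℤ} {w a : Fin n → Fin n → ℤ}
    {l : Fin n → ℤ} (h : VD P v w a l) (i : Fin n) : IsFac P (a i) (-(a i ⬝ᵥ v)) := by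
  refine ⟨fun x hx => ?_, ⟨w i, by simp [h.dual]⟩, fun r d hr => ?_⟩
  · have := h.nonneg x hx i
    push_cast; linarith
  · have h0 : r ⬝ᵥ v + d = 0 := by
      have := hr _ h.mem (by rw [iprod_zc]; push_cast; ring)
      rw [iprod_zc] at this
      exact_mod_cast this
    have hk : ∀ k, k ≠ i → r ⬝ᵥ w k = 0 := by
      intro k hk
      have := hr _ (h.step k) (by
        rw [iprod_zc, dotProduct_add, h.dual, if_neg hk.symm]; push_cast; ring)
      rw [iprod_zc, dotProduct_add] at this
      have : r ⬝ᵥ v + r ⬝ᵥ w k + d = 0 := by exact_mod_cast this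
      linarith
    have hr' : r = (r ⬝ᵥ w i) • a i := by
      conv_lhs => rw [VD.expand_dual h.dual r]
      rw [Finset.sum_eq_single i]
      · intro k _ hki; rw [hk k hki, zero_smul]
      · simp
    refine ⟨r ⬝ᵥ w i, hr', ?_⟩
    have : r ⬝ᵥ v = (r ⬝ᵥ w i) * (a i ⬝ᵥ v) := by
      conv_lhs => rw [hr']
      rw [smul_dotProduct, smul_eq_mul]
    linarith

/-- A facet through a vertex belongs to the dual basis there. -/
theorem VD.fac_eq {n : ℕ} {P : Set (Fin n → ℝ)} {v : Fin n → ℤ} {w a : Fin n → Fin n → ℤ}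
    {l : Fin n → ℤ} (h : VD P v w a l) {r : Fin n → ℤ} {b : ℤ} (hr : IsFac P r b)
    (h0 : r ⬝ᵥ v + b = 0) : ∃ i, r = a i := by
  have hm : ∀ i, 0 ≤ r ⬝ᵥ w i := by
    intro i
    have := hr.nonneg_int (h.step i)
    rw [dotProduct_add] at this
    linarith
  obtain ⟨i, hi⟩ : ∃ i, r ⬝ᵥ w i ≠ 0 := by
    by_contra hcon
    push Not at hcon
    obtain ⟨z, hz⟩ := hr.prim
    have : r = 0 := by
      rw [VD.expand_dual h.dual r]; simp [hcon]
    simp [this] at hz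
  have hi' : 0 < r ⬝ᵥ w i := lt_of_le_of_ne (hm i) (Ne.symm hi)
  obtain ⟨m, hm1, hm2⟩ := hr.uniq (a i) (-(a i ⬝ᵥ v)) (by
    intro x hx hx0
    have e1 : iprod r x + b = ∑ k, ((r ⬝ᵥ w k : ℤ) : ℝ) * (iprod (a k) x - ((a k ⬝ᵥ v : ℤ) : ℝ)) := by
      have e2 : iprod r x = ∑ k, ((r ⬝ᵥ w k : ℤ) : ℝ) * iprod (a k) x := by
        conv_lhs => rw [VD.expand_dual h.dual r]
        rw [iprod_sum_left]
        simp only [iprod_smul_left]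
      have e3 : ((r ⬝ᵥ v : ℤ) : ℝ) = ∑ k, ((r ⬝ᵥ w k : ℤ) : ℝ) * ((a k ⬝ᵥ v : ℤ) : ℝ) := by
        have : r ⬝ᵥ v = ∑ k, (r ⬝ᵥ w k) * (a k ⬝ᵥ v) := by
          conv_lhs => rw [VD.expand_dual h.dual r]
          rw [sum_dotProduct]
          simp only [smul_dotProduct, smul_eq_mul]
        rw [this]; push_cast; rfl
      have e4 : ((r ⬝ᵥ v : ℤ) : ℝ) + b = 0 := by exact_mod_cast h0
      simp only [mul_sub, Finset.sum_sub_distrib]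
      rw [← e2, ← e3]; linarith
    rw [e1] at hx0
    have h5 := (Finset.sum_eq_zero_iff_of_nonneg (fun k _ => mul_nonneg
      (by exact_mod_cast hm k) (by linarith [h.nonneg x hx k]))).mp hx0 i (Finset.mem_univ _)
    rcases mul_eq_zero.mp h5 with h6 | h6
    · exact absurd (by exact_mod_cast h6) hi
    · push_cast; linarith)
  have h7 : (1 : ℤ) = m * (r ⬝ᵥ w i) := by
    have := h.dual i i
    rw [hm1, smul_dotProduct, smul_eq_mul, if_pos rfl] at this
    exact this.symm
  have h8 : m = 1 := by
    have : 0 < m := by nlinarith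
    nlinarith
  exact ⟨i, by rw [hm1, h8, one_smul]⟩



theorem VD.reindex {n : ℕ} {P : Set (Fin n → ℝ)} {v : Fin n → ℤ} {w a : Fin n → Fin n → ℤ}
    {l : Fin n → ℤ} (h : VD P v w a l) (π : Equiv.Perm (Fin n)) :
    VD P v (fun k => w (π k)) (fun k => a (π k)) (fun k => l (π k)) where
  ext := h.ext
  dual i j := by rw [h.dual]; simp
  nonneg x hx i := h.nonneg x hx _
  step i := h.step _
  lpos i := h.lpos _
  nbr i := h.nbr _
  edge F := by
    rw [h.edge F]
    exact (π.surjective.exists (p := fun i => F = segment ℝ (zc v) (zc (v + l i • w i))))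

/-- Moving along the edge `i` to the neighbouring vertex. -/
theorem VD.transit {n : ℕ} {P : Set (Fin n → ℝ)}
    (hV : ∀ x ∈ Set.extremePoints ℝ P, ∃ v w a l, x = zc v ∧ VD P v w a l)
    {v : Fin n → ℤ} {w a : Fin n → Fin n → ℤ}
    {l : Fin n → ℤ} (h : VD P v w a l) (i : Fin n) :
    ∃ (w' a' : Fin n → Fin n → ℤ) (l' β : Fin n → ℤ), VD P (v + l i • w i) w' a' l' ∧
      (∀ k, k ≠ i → a' k = a k) ∧ (∀ k, k ≠ i → w' k = w k + β k • w i) ∧ w' i = - w i ∧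
      a' i ⬝ᵥ w i = -1 := by
  obtain ⟨v', w', a', l', hv', h'⟩ := hV _ (h.nbr i)
  have hv'' := zc_inj hv'
  subst hv''
  have hex : ∀ k, ∃ j, k ≠ i → a k = a' j := by
    intro k
    by_cases hk : k = i
    · exact ⟨i, fun h => absurd hk h⟩
    · obtain ⟨j, hj⟩ := h'.fac_eq (h.isFac k) (by
        rw [dotProduct_add, dotProduct_smul, h.dual, if_neg hk]; simp)
      exact ⟨j, fun _ => hj⟩
  choose g hg using hex
  have hinj : Set.InjOn g (↑(Finset.univ.erase i) : Set (Fin n)) := by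
    intro k hk m hm hkm
    have hk' : k ≠ i := by simpa using hk
    have hm' : m ≠ i := by simpa using hm
    have h1 : a k = a m := by rw [hg k hk', hg m hm', hkm]
    by_contra hne
    have h2 := h.dual k k
    rw [h1, h.dual, if_neg (Ne.symm hne)] at h2
    simp at h2
  obtain ⟨π₀, hπ₀⟩ := Finset.exists_equiv_extend_of_card_eq (α := Fin n) (β := Fin n)
    (t := Finset.univ) (by simp) (s := Finset.univ.erase i) (f := g) (by simp) hinj
  let π : Equiv.Perm (Fin n) := π₀.trans (Equiv.subtypeUnivEquiv (by simp))
  have hπ : ∀ k, k ≠ i → a' (π k) = a k := by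
    intro k hk
    rw [hg k hk, ← hπ₀ k (by simpa using hk)]
    rfl
  have H := h'.reindex π
  have hw : ∀ k, w' (π k) = (if k = i then 0 else w k) + (a i ⬝ᵥ w' (π k)) • w i := by
    intro k
    conv_lhs => rw [VD.expand_int h.dual (w' (π k))]
    rw [← Finset.add_sum_erase _ _ (Finset.mem_univ i), add_comm]
    congr 1
    have : ∀ m ∈ Finset.univ.erase i, (a m ⬝ᵥ w' (π k)) • w m = if m = k then w m else 0 := by
      intro m hm
      have hm' : m ≠ i := by simpa using hm
      rw [← hπ m hm', H.dual]
      split_ifs <;> simp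
    rw [Finset.sum_congr rfl this]
    by_cases hk : k = i
    · subst hk
      rw [if_pos rfl]
      exact Finset.sum_eq_zero fun m hm => by rw [if_neg (by simpa using hm)]
    · rw [if_neg hk, Finset.sum_ite_eq' _ k, if_pos (by simpa using hk)]
  have hwi : w' (π i) = (a i ⬝ᵥ w' (π i)) • w i := by
    have := hw i
    rwa [if_pos rfl, zero_add] at this
  have h1 : (a i ⬝ᵥ w' (π i)) * (a' (π i) ⬝ᵥ w i) = 1 := by
    have := H.dual i i
    rw [if_pos rfl] at this
    rw [hwi, dotProduct_smul, smul_eq_mul] at this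
    exact this
  have h2 : 0 ≤ -(l i * (a' (π i) ⬝ᵥ w i)) := by
    have := (H.isFac i).nonneg_int h.mem
    rw [dotProduct_add, dotProduct_smul, smul_eq_mul] at this
    linarith
  have h3 : a' (π i) ⬝ᵥ w i = -1 := by
    have hl := h.lpos i
    have h4 : a' (π i) ⬝ᵥ w i ≤ 0 := by nlinarith
    rcases Int.mul_eq_one_iff_eq_one_or_neg_one.mp h1 with h5 | h5 <;> omega
  have h4 : a i ⬝ᵥ w' (π i) = -1 := by rw [h3] at h1; linarith
  refine ⟨_, _, _, fun k => a i ⬝ᵥ w' (π k), H, hπ, fun k hk => ?_, ?_, h3⟩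
  · have := hw k
    rwa [if_neg hk] at this
  · rw [hwi, h4]; simp

theorem step1 {n : ℕ} {P : Set (Fin n → ℝ)}
    (hV : ∀ x ∈ Set.extremePoints ℝ P, ∃ v w a l, x = zc v ∧ VD P v w a l)
    (hne : (Set.extremePoints ℝ P).Nonempty) (s : ℤ) (hs : (n : ℤ) < 2 * s) 
    (hfail : ∀ z : Fin n → ℤ, ∃ r b, IsFac P r b ∧ r ⬝ᵥ z + s * b ≤ 0) :
    ∃ v w a l r b, VD P v w a l ∧ IsFac P r b ∧ r ⬝ᵥ v + b = 1 ∧ s + ∑ k, r ⬝ᵥ w k ≤ 0 ∧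
      ∀ i, r ⬝ᵥ w i < 0 → r ⬝ᵥ w i = -1 ∧ l i = 1 := by
  classical
  let S : ℕ → Prop := fun q => ∃ v w a l r b, VD P v w a l ∧ IsFac P r b ∧
    r ⬝ᵥ v + b = (q : ℤ) ∧ s * q + ∑ k, r ⬝ᵥ w k ≤ 0
  have hfe : ∀ v w a l r b, VD P v w a l → IsFac P r b →
      s * (r ⬝ᵥ v + b) + ∑ k, r ⬝ᵥ w k ≤ 0 → S (r ⬝ᵥ v + b).toNat := by
    intro v w a l r b h hr hle
    have h0 := hr.nonneg_int h.mem
    refine ⟨v, w, a, l, r, b, h, hr, by rw [Int.toNat_of_nonneg h0], ?_⟩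
    rw [Int.toNat_of_nonneg h0]; exact hle
  have hS : ∃ q, S q := by
    obtain ⟨x, hx⟩ := hne
    obtain ⟨v, w, a, l, -, h⟩ := hV x hx
    obtain ⟨r, b, hr, hle⟩ := hfail (s • v + ∑ k, w k)
    refine ⟨_, hfe v w a l r b h hr ?_⟩
    rw [dotProduct_add, dotProduct_smul, dotProduct_sum, smul_eq_mul] at hle
    linarith
  have hmin : ∀ v w a l r b, VD P v w a l → IsFac P r b →
      s * (r ⬝ᵥ v + b) + ∑ k, r ⬝ᵥ w k ≤ 0 → (Nat.find hS : ℤ) ≤ r ⬝ᵥ v + b := by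
    intro v w a l r b h hr hle
    have h0 := hr.nonneg_int h.mem
    have := Nat.find_min' hS (hfe v w a l r b h hr hle)
    omega
  obtain ⟨v, w, a, l, r, b, h, hr, hq, hle⟩ := Nat.find_spec hS
  generalize (Nat.find hS : ℕ) = q at *
  have hs0 : 1 ≤ s := by omega
  have hq1 : (1 : ℤ) ≤ q := by
    by_contra hcon
    have hq0 : (q : ℤ) = 0 := by omega
    obtain ⟨i, rfl⟩ := h.fac_eq hr (by rw [hq, hq0])
    simp [hq0, h.dual] at hle
  have key : ∀ i, r ⬝ᵥ w i < 0 → r ⬝ᵥ w i = -1 ∧ l i = q := by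
    intro i hi
    obtain ⟨w', a', l', β, h', ha', hw', hwi, hfi⟩ := h.transit hV i
    obtain ⟨K, hK⟩ : ∃ K : ℤ, ∑ k, w' k = ∑ k, w k + K • w i := by
      refine ⟨(∑ k ∈ Finset.univ.erase i, β k) - 2, ?_⟩
      rw [← Finset.add_sum_erase _ w' (Finset.mem_univ i),
        ← Finset.add_sum_erase _ w (Finset.mem_univ i),
        Finset.sum_congr rfl (fun k hk => hw' k (by simpa using hk)), hwi,
        Finset.sum_add_distrib, ← Finset.sum_smul, sub_smul, two_smul]
      abel
    have hKr : ∀ u : Fin n → ℤ, ∑ k, u ⬝ᵥ w' k = ∑ k, u ⬝ᵥ w k + K * (u ⬝ᵥ w i) := by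
      intro u
      rw [← dotProduct_sum, hK, dotProduct_add, dotProduct_sum, dotProduct_smul, smul_eq_mul]
    have hl := h.lpos i
    have hr' : 0 ≤ q + l i * (r ⬝ᵥ w i) := by
      have := hr.nonneg_int h'.mem
      rw [dotProduct_add, dotProduct_smul, smul_eq_mul] at this
      linarith
    rcases le_or_gt 0 (s * l i + K) with hc | hc
    · exfalso
      have := hmin _ w' a' l' r b h' hr (by
        rw [hKr r, dotProduct_add, dotProduct_smul, smul_eq_mul]
        have e : s * (r ⬝ᵥ v + l i * r ⬝ᵥ w i + b) + (∑ k, r ⬝ᵥ w k + K * r ⬝ᵥ w i) =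
          s * (r ⬝ᵥ v + b) + ∑ k, r ⬝ᵥ w k + (s * l i + K) * (r ⬝ᵥ w i) := by ring
        rw [e, hq]
        nlinarith)
      rw [dotProduct_add, dotProduct_smul, smul_eq_mul] at this
      nlinarith
    · have e1 : ∑ k, a' i ⬝ᵥ w' k = 1 := by simp [h'.dual]
      have e2 : ∑ k, a' i ⬝ᵥ w k = 1 + K := by
        have := hKr (a' i)
        rw [e1, hfi] at this; linarith
      have e3 : a' i ⬝ᵥ v + -(a' i ⬝ᵥ (v + l i • w i)) = l i := by
        rw [dotProduct_add, dotProduct_smul, hfi, smul_eq_mul]; ring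
      have := hmin v w a l (a' i) _ h (h'.isFac i) (by
        rw [e3, e2]; omega)
      rw [e3] at this
      have e4 : l i = q := by nlinarith
      refine ⟨?_, e4⟩
      rw [e4] at hr'
      nlinarith
  have hsum : -(n : ℤ) ≤ ∑ k, r ⬝ᵥ w k := by
    have : ∑ k : Fin n, (-1 : ℤ) ≤ ∑ k, r ⬝ᵥ w k := Finset.sum_le_sum fun k _ => by
      rcases lt_or_ge (r ⬝ᵥ w k) 0 with h1 | h1
      · rw [(key k h1).1]
      · linarith
    simpa using this
  have hq2 : (q : ℤ) = 1 := by nlinarith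
  refine ⟨v, w, a, l, r, b, h, hr, by rw [hq, hq2], by rw [hq2] at hle; linarith, ?_⟩
  rw [hq2] at key
  exact key

theorem step2 {n : ℕ} {P : Set (Fin n → ℝ)}
    (hV : ∀ x ∈ Set.extremePoints ℝ P, ∃ v w a l, x = zc v ∧ VD P v w a l)
    (hne : (Set.extremePoints ℝ P).Nonempty) (s : ℤ) (hs : (n : ℤ) < 2 * s) 
    (hfail : ∀ z : Fin n → ℤ, ∃ r b, IsFac P r b ∧ r ⬝ᵥ z + s * b ≤ 0) :
    ∃ v w a l, ∃ N : Finset (Fin n), VD P v w a l ∧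
      IsFac P (-∑ i ∈ N, a i) (1 + ∑ i ∈ N, a i ⬝ᵥ v) ∧ s ≤ N.card := by
  classical
  obtain ⟨v, w, a, l, r, b, h, hr, hb, hle, hneg⟩ := step1 hV hne s hs hfail
  let N : Finset (Fin n) := Finset.univ.filter fun i => r ⬝ᵥ w i < 0
  have hN : ∀ i, i ∈ N ↔ r ⬝ᵥ w i < 0 := by intro i; simp [N]
  have hN1 : ∀ i ∈ N, r ⬝ᵥ w i = -1 := fun i hi => (hneg i ((hN i).mp hi)).1
  have hc0 : ∀ k ∈ Nᶜ, 0 ≤ r ⬝ᵥ w k := by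
    intro k hk
    rw [Finset.mem_compl, hN] at hk
    omega
  have hsplit : ∀ f : Fin n → ℤ, ∑ k, f k = ∑ k ∈ N, f k + ∑ k ∈ Nᶜ, f k :=
    fun f => (Finset.sum_add_sum_compl N f).symm
  have hsN : ∑ k ∈ N, r ⬝ᵥ w k = -(N.card : ℤ) := by
    rw [Finset.sum_congr rfl hN1]; simp
  have hcard : (N.card : ℤ) + (Nᶜ.card : ℤ) = n := by
    have := Finset.card_add_card_compl N
    rw [Fintype.card_fin] at this
    exact_mod_cast this
  rw [hsplit, hsN] at hle
  have hcz : ∀ k ∈ Nᶜ, r ⬝ᵥ w k = 0 := by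
    intro j hj
    by_contra hcj
    have hcj1 : 1 ≤ r ⬝ᵥ w j := by have := hc0 j hj; omega
    -- the points `v + w i + w k + c k w i`
    have hpts : ∀ i ∈ N, ∀ k ∈ Nᶜ, zc (v + w i + (w k + (r ⬝ᵥ w k) • w i)) ∈ P := by
      intro i hi k hk
      have hki : k ≠ i := by
        rintro rfl; exact (Finset.mem_compl.mp hk) hi
      obtain ⟨w', a', l', β, h', ha', hw', hwi, hfi⟩ := h.transit hV i
      rw [(hneg i ((hN i).mp hi)).2, one_smul] at h'
      obtain ⟨m, hm⟩ := h'.fac_eq hr (by rw [dotProduct_add, hN1 i hi]; linarith)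
      have hmi : m = i := by
        by_contra hmi
        have := hN1 i hi
        rw [hm, ha' m hmi, h.dual, if_neg hmi] at this
        simp at this
      subst hmi
      have h1 := h'.dual m k
      rw [if_neg (Ne.symm hki), ← hm, hw' k hki, dotProduct_add, dotProduct_smul, hN1 m hi,
        smul_eq_mul] at h1
      have h2 : β k = r ⬝ᵥ w k := by linarith
      have h3 := h'.step k
      rwa [hw' k hki, h2] at h3
    let t : ℤ := s - 1 - Nᶜ.card
    obtain ⟨r', b', hr', hle'⟩ := hfail (s • v + ∑ k, w k + t • w j)
    rw [dotProduct_add, dotProduct_add, dotProduct_smul, dotProduct_smul, dotProduct_sum,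
      smul_eq_mul, smul_eq_mul, hsplit] at hle'
    have hA := hr'.nonneg_int h.mem
    have hAm : ∀ k, 0 ≤ r' ⬝ᵥ v + b' + r' ⬝ᵥ w k := by
      intro k
      have := hr'.nonneg_int (h.step k)
      rw [dotProduct_add] at this
      linarith
    have hAmm : ∀ i ∈ N, ∀ k ∈ Nᶜ, 0 ≤ r' ⬝ᵥ v + b' + r' ⬝ᵥ w i + r' ⬝ᵥ w k +
        (r ⬝ᵥ w k) * (r' ⬝ᵥ w i) := by
      intro i hi k hk
      have := hr'.nonneg_int (hpts i hi k hk)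
      rw [dotProduct_add, dotProduct_add, dotProduct_add, dotProduct_smul, smul_eq_mul] at this
      linarith
    generalize hAdef : r' ⬝ᵥ v + b' = A at *
    let z : Fin n → ℤ := fun k => if k = j then 1 + t else 1
    have hzsum : ∀ f : Fin n → ℤ, ∑ k ∈ Nᶜ, z k * f k = ∑ k ∈ Nᶜ, f k + t * f j := by
      intro f
      have : ∀ k ∈ Nᶜ, z k * f k = f k + if k = j then t * f k else 0 := by
        intro k _
        simp only [z]
        split_ifs <;> ring
      rw [Finset.sum_congr rfl this, Finset.sum_add_distrib, Finset.sum_ite_eq', if_pos hj]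
    have hcsum : r ⬝ᵥ w j ≤ ∑ k ∈ Nᶜ, r ⬝ᵥ w k := Finset.single_le_sum hc0 hj
    have ht : 1 ≤ t := by simp only [t]; omega
    have hz1 : ∀ k, 1 ≤ z k := by
      intro k; simp only [z]; split_ifs <;> omega
    have hZ1 : ∑ k ∈ Nᶜ, z k = s - 1 := by
      have := hzsum (fun _ => 1)
      simp only [mul_one, Finset.sum_const, nsmul_eq_mul] at this
      rw [this]; simp only [t]; ring
    let C := ∑ k ∈ Nᶜ, z k * (r ⬝ᵥ w k)
    let Z := ∑ k ∈ Nᶜ, z k * (r' ⬝ᵥ w k)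
    let S := ∑ k ∈ N, r' ⬝ᵥ w k
    let y0 := s - N.card + C
    have hy0 : 1 ≤ y0 := by
      have h1 : C = ∑ k ∈ Nᶜ, r ⬝ᵥ w k + t * r ⬝ᵥ w j := hzsum _
      have h2 : t ≤ t * r ⬝ᵥ w j := by nlinarith
      have h3 : t = s - 1 - Nᶜ.card := rfl
      simp only [y0]
      omega
    have T1 : ∑ k ∈ Nᶜ, z k * (A + r' ⬝ᵥ w k) = (s - 1) * A + Z := by
      simp only [mul_add, Finset.sum_add_distrib, ← Finset.sum_mul, hZ1, Z]
    have T2 : ∀ i ∈ N, ∑ k ∈ Nᶜ, z k * (A + r' ⬝ᵥ w i + r' ⬝ᵥ w k + (r ⬝ᵥ w k) * (r' ⬝ᵥ w i)) =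
        (s - 1) * A + Z + (s - 1 + C) * (r' ⬝ᵥ w i) := by
      intro i _
      have : ∀ k ∈ Nᶜ, z k * (A + r' ⬝ᵥ w i + r' ⬝ᵥ w k + (r ⬝ᵥ w k) * (r' ⬝ᵥ w i)) =
        z k * (A + r' ⬝ᵥ w k) + z k * (r' ⬝ᵥ w i) + z k * (r ⬝ᵥ w k) * (r' ⬝ᵥ w i) := by
        intro k _; ring
      rw [Finset.sum_congr rfl this, Finset.sum_add_distrib, Finset.sum_add_distrib, T1,
        ← Finset.sum_mul, ← Finset.sum_mul, hZ1]
      simp only [C]; ring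
    have T2' : ∑ i ∈ N, ((A + r' ⬝ᵥ w i) +
        ∑ k ∈ Nᶜ, z k * (A + r' ⬝ᵥ w i + r' ⬝ᵥ w k + (r ⬝ᵥ w k) * (r' ⬝ᵥ w i))) =
        N.card * (s * A + Z) + (s + C) * S := by
      rw [Finset.sum_congr rfl (fun i hi => by rw [T2 i hi])]
      have : ∀ i ∈ N, A + r' ⬝ᵥ w i + ((s - 1) * A + Z + (s - 1 + C) * (r' ⬝ᵥ w i)) =
        (s * A + Z) + (s + C) * (r' ⬝ᵥ w i) := by intro i _; ring
      rw [Finset.sum_congr rfl this, Finset.sum_add_distrib, ← Finset.mul_sum]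
      simp [S]
    have hval : s * A + S + Z ≤ 0 := by
      have := hzsum (fun k => r' ⬝ᵥ w k)
      simp only [Z, S, this]
      have e : s * A = s * (r' ⬝ᵥ v) + s * b' := by rw [← hAdef]; ring
      rw [e]; linarith
    have n1 : ∀ k ∈ Nᶜ, 0 ≤ z k * (A + r' ⬝ᵥ w k) := fun k _ =>
      mul_nonneg (by linarith [hz1 k]) (hAm k)
    have n2 : ∀ i ∈ N, 0 ≤ (A + r' ⬝ᵥ w i) +
        ∑ k ∈ Nᶜ, z k * (A + r' ⬝ᵥ w i + r' ⬝ᵥ w k + (r ⬝ᵥ w k) * (r' ⬝ᵥ w i)) := by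
      intro i hi
      exact add_nonneg (hAm i) (Finset.sum_nonneg fun k hk =>
        mul_nonneg (by linarith [hz1 k]) (hAmm i hi k hk))
    have p1 := Finset.sum_nonneg n1
    have p2 := Finset.sum_nonneg n2
    rw [T1] at p1
    rw [T2'] at p2
    have id : (s + C) * (s * A + S + Z) = y0 * (A + ((s - 1) * A + Z)) +
        (N.card * (s * A + Z) + (s + C) * S) := by simp only [y0]; ring
    have hY : 0 ≤ s + C := by simp only [y0] at hy0; omega
    have hL : (s + C) * (s * A + S + Z) ≤ 0 := by nlinarith
    have q1 : 0 ≤ y0 * (A + ((s - 1) * A + Z)) := mul_nonneg (by linarith) (by linarith)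
    have q2 : y0 * (A + ((s - 1) * A + Z)) = 0 := by linarith
    have q3 : N.card * (s * A + Z) + (s + C) * S = 0 := by linarith
    have q4 : A + ((s - 1) * A + Z) = 0 := by
      rcases mul_eq_zero.mp q2 with q | q
      · omega
      · exact q
    have hA0 : A = 0 := by linarith
    have q5 : (s - 1) * A + Z = 0 := by linarith
    have hm1 : ∀ k ∈ Nᶜ, r' ⬝ᵥ w k = 0 := by
      intro k hk
      rw [← T1] at q5
      have := (Finset.sum_eq_zero_iff_of_nonneg n1).mp q5 k hk
      rcases mul_eq_zero.mp this with q | q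
      · have := hz1 k; omega
      · linarith
    have hm2 : ∀ k ∈ N, r' ⬝ᵥ w k = 0 := by
      intro k hk
      rw [← T2'] at q3
      have := (Finset.sum_eq_zero_iff_of_nonneg n2).mp q3 k hk
      have u1 := hAm k
      have u2 : 0 ≤ ∑ k' ∈ Nᶜ, z k' * (A + r' ⬝ᵥ w k + r' ⬝ᵥ w k' + (r ⬝ᵥ w k') * (r' ⬝ᵥ w k)) :=
        Finset.sum_nonneg fun k' hk' => mul_nonneg (by linarith [hz1 k']) (hAmm k hk k' hk')
      linarith
    have hr0 : r' = 0 := by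
      rw [VD.expand_dual h.dual r']
      refine Finset.sum_eq_zero fun k _ => ?_
      by_cases hk : k ∈ N
      · rw [hm2 k hk, zero_smul]
      · rw [hm1 k (Finset.mem_compl.mpr hk), zero_smul]
    obtain ⟨y, hy⟩ := hr'.prim
    simp [hr0] at hy
  have hrr : r = -∑ i ∈ N, a i := by
    conv_lhs => rw [VD.expand_dual h.dual r]
    rw [← Finset.sum_add_sum_compl N, Finset.sum_congr rfl (fun i hi => by rw [hN1 i hi]),
      Finset.sum_congr (s₁ := Nᶜ) rfl (fun i hi => by rw [hcz i hi])]
    simp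
  have hbb : b = 1 + ∑ i ∈ N, a i ⬝ᵥ v := by
    rw [hrr, neg_dotProduct, sum_dotProduct] at hb
    linarith
  refine ⟨v, w, a, l, N, h, ?_, ?_⟩
  · rw [← hrr, ← hbb]; exact hr
  · have : ∑ k ∈ Nᶜ, r ⬝ᵥ w k = 0 := Finset.sum_eq_zero hcz
    linarith



/-- `iprod a` as a linear map. -/
noncomputable def iprodL {n : ℕ} (a : Fin n → ℤ) : (Fin n → ℝ) →ₗ[ℝ] ℝ where
  toFun := iprod a
  map_add' := iprod_add a
  map_smul' k x := by simp [iprod_smul]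

theorem iprodL_apply {n : ℕ} (a : Fin n → ℤ) (x : Fin n → ℝ) : iprodL a x = iprod a x := rfl

theorem le_on_hull {n : ℕ} {V : Set (Fin n → ℝ)} {u : (Fin n → ℝ) →ₗ[ℝ] ℝ} {c : ℝ}
    (h : ∀ v ∈ V, c ≤ u v) : ∀ x ∈ convexHull ℝ V, c ≤ u x := by
  have : convexHull ℝ V ⊆ {x | c ≤ u x} :=
    convexHull_min h (convex_halfSpace_ge u.isLinear c)
  exact this

theorem eq_on_hull {n : ℕ} {V : Set (Fin n → ℝ)} {u : (Fin n → ℝ) →ₗ[ℝ] ℝ} {c : ℝ}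
    (h : ∀ v ∈ V, u v = c) : ∀ x ∈ convexHull ℝ V, u x = c := by
  have : convexHull ℝ V ⊆ {x | u x = c} :=
    convexHull_min h (convex_hyperplane u.isLinear c)
  exact this

theorem face_hull {n : ℕ} (V : Finset (Fin n → ℝ)) (u : (Fin n → ℝ) →ₗ[ℝ] ℝ) (c : ℝ)
    (h : ∀ v ∈ V, c ≤ u v) :
    {x ∈ convexHull ℝ (↑V : Set (Fin n → ℝ)) | u x = c} =
      convexHull ℝ (↑(V.filter fun v => u v = c) : Set (Fin n → ℝ)) := by
  apply Set.Subset.antisymm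
  · rintro x ⟨hx, hux⟩
    rw [Finset.mem_convexHull'] at hx
    obtain ⟨w, hw0, hw1, rfl⟩ := hx
    have h1 : ∑ y ∈ V, w y * (u y - c) = 0 := by
      simp only [mul_sub, Finset.sum_sub_distrib, ← Finset.sum_mul, hw1]
      rw [map_sum] at hux
      simp only [map_smul, smul_eq_mul] at hux
      linarith
    have h2 := (Finset.sum_eq_zero_iff_of_nonneg (fun y hy =>
      mul_nonneg (hw0 y hy) (by linarith [h y hy]))).mp h1
    have h3 : ∀ y ∈ V, ¬ (u y = c) → w y = 0 := by
      intro y hy hne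
      rcases mul_eq_zero.mp (h2 y hy) with q | q
      · exact q
      · exact absurd (by linarith) hne
    rw [Finset.mem_convexHull']
    refine ⟨w, fun y hy => hw0 y (Finset.mem_filter.mp hy).1, ?_, ?_⟩
    · rw [Finset.sum_filter_of_ne, hw1]
      intro y hy hne
      by_contra hcon
      exact hne (h3 y hy hcon)
    · rw [Finset.sum_filter_of_ne]
      intro y hy hne
      by_contra hcon
      exact hne (by rw [h3 y hy hcon, zero_smul])
  · intro x hx
    refine ⟨convexHull_mono (by intro y hy; exact (Finset.mem_filter.mp hy).1) hx, ?_⟩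
    exact eq_on_hull (by intro y hy; exact (Finset.mem_filter.mp hy).2) x hx

theorem ext_sep {n : ℕ} {V : Set (Fin n → ℝ)} (hV : V.Finite) {v : Fin n → ℝ}
    (hv : v ∈ Set.extremePoints ℝ (convexHull ℝ V)) :
    ∃ f : (Fin n → ℝ) →ₗ[ℝ] ℝ, ∀ g ∈ V, g ≠ v → f v < f g := by
  have h1 := ((convex_convexHull ℝ V).mem_extremePoints_iff_convex_sdiff.mp hv).2
  have h2 : convexHull ℝ (V \ {v}) ⊆ convexHull ℝ V \ {v} := by
    refine convexHull_min ?_ h1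
    intro g hg
    exact ⟨subset_convexHull ℝ V hg.1, hg.2⟩
  have h3 : v ∉ convexHull ℝ (V \ {v}) := fun h => (h2 h).2 rfl
  obtain ⟨f, u, hf1, hf2⟩ := geometric_hahn_banach_point_closed (convex_convexHull ℝ _)
    ((hV.subset Set.diff_subset).isCompact_convexHull (𝕜 := ℝ)).isClosed h3
  refine ⟨f.toLinearMap, fun g hg hne => ?_⟩
  exact hf1.trans (hf2 g (subset_convexHull ℝ _ ⟨hg, hne⟩))

theorem cone_lemma {n : ℕ} (V : Finset (Fin n → ℝ)) {v : Fin n → ℝ}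
    (hv : v ∈ Set.extremePoints ℝ (convexHull ℝ (↑V : Set (Fin n → ℝ))))
    (φ : (Fin n → ℝ) →ₗ[ℝ] ℝ)
    (hφ : ∀ F, IsFace (convexHull ℝ (↑V : Set (Fin n → ℝ))) F → v ∈ F → fdim F = 1 →
      ∀ x ∈ F, φ v ≤ φ x) :
    ∀ x ∈ convexHull ℝ (↑V : Set (Fin n → ℝ)), φ v ≤ φ x := by
  classical
  apply le_on_hull
  obtain ⟨h, hh⟩ := ext_sep V.finite_toSet hv
  let nz : (Fin n → ℝ) → (Fin n → ℝ) := fun g => (h g - h v)⁻¹ • (g - v)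
  let G : Finset (Fin n → ℝ) := (V.erase v).image nz
  have hnz : ∀ g ∈ V, g ≠ v → g - v = (h g - h v) • nz g := by
    intro g hg hne
    have := hh g hg hne
    simp only [nz]
    rw [smul_smul, mul_inv_cancel₀ (by linarith), one_smul]
  have hnzh : ∀ g ∈ V, g ≠ v → h (nz g) = 1 := by
    intro g hg hne
    have := hh g hg hne
    simp only [nz, map_smul, map_sub, smul_eq_mul]
    rw [inv_mul_cancel₀ (by linarith)]
  have hGmem : ∀ g ∈ V, g ≠ v → nz g ∈ G := fun g hg hne =>
    Finset.mem_image_of_mem _ (Finset.mem_erase.mpr ⟨hne, hg⟩)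
  have hext : ∀ e ∈ Set.extremePoints ℝ (convexHull ℝ (↑G : Set (Fin n → ℝ))), 0 ≤ φ e := by
    intro e he
    have heG : e ∈ G := extremePoints_convexHull_subset he
    obtain ⟨g0, hg0, hg0e⟩ := Finset.mem_image.mp heG
    have hg0V := Finset.mem_of_mem_erase hg0
    have hg0ne := Finset.ne_of_mem_erase hg0
    obtain ⟨f, hf⟩ := ext_sep G.finite_toSet he
    have hhe : h e = 1 := by rw [← hg0e]; exact hnzh g0 hg0V hg0ne
    let u : (Fin n → ℝ) →ₗ[ℝ] ℝ := f - (f e) • h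
    have hue : u e = 0 := by simp [u, hhe]
    have hu : ∀ g ∈ V, g ≠ v → nz g ≠ e → 0 < u (nz g) := by
      intro g hg hne hnee
      have := hf _ (hGmem g hg hne) hnee
      simp only [u, LinearMap.sub_apply, LinearMap.smul_apply, smul_eq_mul, hnzh g hg hne]
      linarith
    have hug : ∀ g ∈ V, g ≠ v → u g = u v + (h g - h v) * u (nz g) := by
      intro g hg hne
      have := congrArg u (hnz g hg hne)
      rw [map_sub, map_smul, smul_eq_mul] at this
      linarith
    have hmin : ∀ g ∈ V, u v ≤ u g := by
      intro g hg
      by_cases hne : g = v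
      · rw [hne]
      have h1 := hh g hg hne
      by_cases hnee : nz g = e
      · rw [hug g hg hne, hnee, hue]; simp
      · have h2 := hu g hg hne hnee
        rw [hug g hg hne]
        nlinarith
    let F : Set (Fin n → ℝ) := {x ∈ convexHull ℝ (↑V : Set (Fin n → ℝ)) | u x = u v}
    have hvF : v ∈ F := ⟨hv.1, rfl⟩
    have hF : IsFace (convexHull ℝ (↑V : Set (Fin n → ℝ))) F :=
      ⟨⟨v, hvF⟩, u, u v, le_on_hull hmin, rfl⟩
    have hg0F : g0 ∈ F := by
      refine ⟨subset_convexHull ℝ _ hg0V, ?_⟩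
      rw [hug g0 hg0V hg0ne, hg0e, hue]; simp
    have hg0v : g0 - v = (h g0 - h v) • e := by rw [← hg0e]; exact hnz g0 hg0V hg0ne
    have hpos := hh g0 hg0V hg0ne
    have hline : ∀ x ∈ F, x - v ∈ Submodule.span ℝ {e} := by
      intro x hx
      have hx' : x ∈ convexHull ℝ (↑(V.filter fun g => u g = u v) : Set (Fin n → ℝ)) := by
        rw [← face_hull V u (u v) hmin]; exact hx
      let A : Set (Fin n → ℝ) := {y | y - v ∈ Submodule.span ℝ {e}}
      have hA : Convex ℝ A := by
        intro y hy z hz p q hp hq hpq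
        have : p • y + q • z - v = p • (y - v) + q • (z - v) := by
          rw [smul_sub, smul_sub]
          have : v = p • v + q • v := by rw [← add_smul, hpq, one_smul]
          conv_lhs => rw [this]
          abel
        simp only [A, Set.mem_setOf_eq]
        rw [this]
        exact Submodule.add_mem _ (Submodule.smul_mem _ _ hy) (Submodule.smul_mem _ _ hz)
      refine (convexHull_min ?_ hA : _ ⊆ A) hx'
      intro g hg
      obtain ⟨hgV, hgu⟩ := Finset.mem_filter.mp (Finset.mem_coe.mp hg)
      by_cases hne : g = v
      · simp [A, hne]
      · by_cases hnee : nz g = e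
        · simp only [A, Set.mem_setOf_eq]
          rw [hnz g hgV hne, hnee]
          exact Submodule.smul_mem _ _ (Submodule.mem_span_singleton_self e)
        · exfalso
          have h1 := hh g hgV hne
          have h2 := hu g hgV hne hnee
          have h3 := hug g hgV hne
          rw [hgu] at h3
          nlinarith
    have hspan : vectorSpan ℝ F = Submodule.span ℝ {e} := by
      apply le_antisymm
      · rw [vectorSpan_eq_span_vsub_set_right ℝ hvF, Submodule.span_le]
        rintro _ ⟨x, hx, rfl⟩
        exact hline x hx
      · rw [Submodule.span_singleton_le_iff_mem]
        have := vsub_mem_vectorSpan ℝ hg0F hvF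
        rw [vsub_eq_sub, hg0v] at this
        exact (Submodule.smul_mem_iff _ (by linarith)).mp this
    have hd : fdim F = 1 := by
      rw [fdim, hspan]
      apply finrank_span_singleton
      rintro rfl
      simp at hhe
    have h4 := hφ F hF hvF hd g0 hg0F
    have h5 := congrArg φ hg0v
    rw [map_sub, map_smul, smul_eq_mul] at h5
    have : 0 ≤ (h g0 - h v) * φ e := by linarith
    exact nonneg_of_mul_nonneg_right this (by linarith)
  have hK : ∀ x ∈ convexHull ℝ (↑G : Set (Fin n → ℝ)), 0 ≤ φ x := by
    have hc : IsCompact (convexHull ℝ (↑G : Set (Fin n → ℝ))) :=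
      G.finite_toSet.isCompact_convexHull (𝕜 := ℝ)
    intro x hx
    rw [← closure_convexHull_extremePoints hc (convex_convexHull ℝ _)] at hx
    have hcl : IsClosed {x | 0 ≤ φ x} :=
      isClosed_le continuous_const φ.continuous_of_finiteDimensional
    exact (closure_minimal (le_on_hull hext) hcl : _ ⊆ {x | 0 ≤ φ x}) hx
  intro g hg
  by_cases hne : g = v
  · rw [hne]
  · have h1 := hh g hg hne
    have h2 := hK _ (subset_convexHull ℝ _ (hGmem g hg hne))
    have h3 := congrArg φ (hnz g hg hne)
    rw [map_sub, map_smul, smul_eq_mul] at h3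
    nlinarith

theorem ext_of_unique_min {n : ℕ} {A : Set (Fin n → ℝ)} {y : Fin n → ℝ} (hy : y ∈ A)
    (u : (Fin n → ℝ) →ₗ[ℝ] ℝ) (h : ∀ x ∈ A, u x ≤ u y → x = y) :
    y ∈ Set.extremePoints ℝ A := by
  rw [mem_extremePoints]
  refine ⟨hy, fun x₁ h₁ x₂ h₂ ho => ?_⟩
  obtain ⟨p, q, hp, hq, hpq, hxy⟩ := ho
  have hu := congrArg u hxy
  rw [map_add, map_smul, map_smul, smul_eq_mul, smul_eq_mul] at hu
  have hle : ∀ x ∈ A, u y ≤ u x := by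
    intro x hx
    by_contra hcon
    have := h x hx (by linarith)
    rw [this] at hcon
    exact hcon le_rfl
  have g1 := hle x₁ h₁
  have g2 := hle x₂ h₂
  have e : u y = (p + q) * u y := by rw [hpq, one_mul]
  constructor
  · apply h x₁ h₁
    nlinarith
  · apply h x₂ h₂
    nlinarith

theorem ext_of_face {n : ℕ} {A F : Set (Fin n → ℝ)} (hF : IsFace A F) {y : Fin n → ℝ}
    (hy : y ∈ Set.extremePoints ℝ F) : y ∈ Set.extremePoints ℝ A := by
  obtain ⟨-, u, c, hc, rfl⟩ := hF
  rw [mem_extremePoints] at hy ⊢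
  obtain ⟨⟨hyA, hyc⟩, hy⟩ := hy
  refine ⟨hyA, fun x₁ h₁ x₂ h₂ ho => ?_⟩
  have ho' := ho
  obtain ⟨p, q, hp, hq, hpq, hxy⟩ := ho
  have hu := congrArg u hxy
  rw [map_add, map_smul, map_smul, smul_eq_mul, smul_eq_mul, hyc] at hu
  have g1 := hc x₁ h₁
  have g2 := hc x₂ h₂
  have e : c = (p + q) * c := by rw [hpq, one_mul]
  have e1 : u x₁ = c := by nlinarith
  have e2 : u x₂ = c := by nlinarith
  exact hy x₁ ⟨h₁, e1⟩ x₂ ⟨h₂, e2⟩ ho'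

theorem ext_mem_face {n : ℕ} {A F : Set (Fin n → ℝ)} (hF : IsFace A F) {y : Fin n → ℝ}
    (hyF : y ∈ F) (hy : y ∈ Set.extremePoints ℝ A) : y ∈ Set.extremePoints ℝ F := by
  obtain ⟨-, u, c, hc, rfl⟩ := hF
  rw [mem_extremePoints] at hy ⊢
  exact ⟨hyF, fun x₁ h₁ x₂ h₂ ho => hy.2 x₁ h₁.1 x₂ h₂.1 ho⟩

theorem ext_lattice {n : ℕ} {P : Set (Fin n → ℝ)} (hP : IsLatticePolytope P) {x : Fin n → ℝ}
    (hx : x ∈ Set.extremePoints ℝ P) : ∃ z : Fin n → ℤ, x = zc z := by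
  obtain ⟨V, hV, rfl⟩ := hP
  have := hV x (extremePoints_convexHull_subset hx)
  choose z hz using this
  exact ⟨z, funext hz⟩

theorem exists_VD {n : ℕ} {P : Set (Fin n → ℝ)} (hP : IsLatticePolytope P)
    (hfull : affineSpan ℝ P = ⊤) (hsm : IsSmoothPoly P) :
    ∀ x ∈ Set.extremePoints ℝ P, ∃ v w a l, x = zc v ∧ VD P v w a l := by
  classical
  intro x hx
  obtain ⟨v, rfl⟩ := ext_lattice hP hx
  have htop : vectorSpan ℝ P = ⊤ := by
    rw [← direction_affineSpan, hfull, AffineSubspace.direction_top]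
  have hd : fdim P = n := by
    rw [fdim, htop, finrank_top]; simp
  have H := hsm _ hx
  rw [hd, htop] at H
  obtain ⟨w, c, hc, -, -, -, hz, hedge⟩ := H
  change ∀ F, _ ↔ ∃ i, F = segment ℝ (zc v) (zc v + c i • zc (w i)) at hedge
  have hz' : ∀ z : Fin n → ℤ, ∃ m : Fin n → ℤ, z = ∑ i, m i • w i := by
    intro z
    obtain ⟨m, hm⟩ := hz z trivial
    refine ⟨m, ?_⟩
    ext j
    have := congrFun hm j
    simp only [Finset.sum_apply, Pi.smul_apply, smul_eq_mul] at this ⊢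
    exact_mod_cast this
  choose m hm using fun k : Fin n => hz' (Pi.single k 1)
  let a : Fin n → Fin n → ℤ := fun k j => m j k
  have dual : ∀ i j, a i ⬝ᵥ w j = if i = j then 1 else 0 := by
    have h1 : (Matrix.of m) * (Matrix.of w) = 1 := by
      ext i j
      have := congrFun (hm i) j
      simp only [Finset.sum_apply, Pi.smul_apply, smul_eq_mul, Pi.single_apply] at this
      simp only [Matrix.mul_apply, Matrix.of_apply, Matrix.one_apply]
      rw [← this]
      simp [eq_comm]
    have h2 := mul_eq_one_comm.mp h1
    intro i j
    have := congrFun (congrFun h2 j) i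
    simp only [Matrix.mul_apply, Matrix.of_apply, Matrix.one_apply] at this
    simp only [dotProduct, a]
    rw [show (if i = j then (1 : ℤ) else 0) = if j = i then 1 else 0 by simp [eq_comm], ← this]
    exact Finset.sum_congr rfl fun k _ => mul_comm _ _
  have haw : ∀ i j, iprod (a i) (zc (w j)) = if i = j then 1 else 0 := by
    intro i j
    rw [iprod_zc, dual]; split_ifs <;> simp
  have hconv : Convex ℝ P := by
    obtain ⟨V, -, rfl⟩ := hP
    exact convex_convexHull ℝ _
  have hnonneg : ∀ x ∈ P, ∀ i, ((a i ⬝ᵥ v : ℤ) : ℝ) ≤ iprod (a i) x := by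
    intro x hxP i
    obtain ⟨V, -, rfl⟩ := hP
    rw [← iprod_zc]
    refine cone_lemma V hx (iprodL (a i)) ?_ x hxP
    intro F hF hvF hdF y hy
    obtain ⟨j, rfl⟩ := (hedge F).mp ⟨hF, hvF, hdF⟩
    rw [segment_eq_image'] at hy
    obtain ⟨θ, hθ, rfl⟩ := hy
    simp only [iprodL_apply, iprod_add, iprod_smul, add_sub_cancel_left, haw]
    have := hc j
    have := hθ.1
    have : (0 : ℝ) ≤ θ * (c j * if i = j then 1 else 0) := by split_ifs <;> positivity
    linarith
  have hface : ∀ i, IsFace P (segment ℝ (zc v) (zc v + c i • zc (w i))) := fun i =>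
    ((hedge _).mpr ⟨i, rfl⟩).1
  have hnbr : ∀ i, zc v + c i • zc (w i) ∈ Set.extremePoints ℝ P := by
    intro i
    refine ext_of_face (hface i) (ext_of_unique_min (right_mem_segment _ _ _) (iprodL (-(a i))) ?_)
    intro y hy hle
    rw [segment_eq_image'] at hy
    obtain ⟨θ, hθ, rfl⟩ := hy
    simp only [iprodL_apply, iprod_neg_left, iprod_add, iprod_smul, add_sub_cancel_left, haw,
      if_true] at hle ⊢
    have h1 := hc i
    have h2 := hθ.2
    have : θ = 1 := by nlinarith
    rw [this, one_smul]
  choose v' hv' using fun i => ext_lattice hP (hnbr i)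
  let l : Fin n → ℤ := fun i => a i ⬝ᵥ (v' i - v)
  have hl : ∀ i, (l i : ℝ) = c i := by
    intro i
    simp only [l]
    rw [← iprod_zc, zc_sub, ← hv', add_sub_cancel_left, iprod_smul, haw, if_pos rfl, mul_one]
  have hlv : ∀ i, zc (v + l i • w i) = zc v + c i • zc (w i) := by
    intro i
    rw [zc_add, zc_smul, hl]
  have hl1 : ∀ i, 1 ≤ l i := by
    intro i
    have := hc i
    rw [← hl] at this
    have : 0 < l i := by exact_mod_cast this
    omega
  refine ⟨v, w, a, l, rfl, hx, dual, hnonneg, ?_, hl1, ?_, ?_⟩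
  · intro i
    have h1 : (1 : ℝ) ≤ l i := by exact_mod_cast hl1 i
    have h2 : zc v + c i • zc (w i) ∈ P := (hnbr i).1
    rw [← hl] at h2
    have h3 := hconv.segment_subset hx.1 h2
    apply h3
    rw [segment_eq_image']
    refine ⟨(l i : ℝ)⁻¹, ⟨by positivity, inv_le_one_of_one_le₀ h1⟩, ?_⟩
    simp only [add_sub_cancel_left]
    rw [smul_smul, inv_mul_cancel₀ (by positivity), one_smul, zc_add]
  · intro i; rw [hlv]; exact hnbr i
  · intro F
    rw [hedge F]
    simp only [hlv]

theorem latticePoly_convex {n : ℕ} {P : Set (Fin n → ℝ)} (hP : IsLatticePolytope P) :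
    Convex ℝ P := by
  obtain ⟨V, -, rfl⟩ := hP
  exact convex_convexHull ℝ _

theorem latticePoly_compact {n : ℕ} {P : Set (Fin n → ℝ)} (hP : IsLatticePolytope P) :
    IsCompact P := by
  obtain ⟨V, -, rfl⟩ := hP
  exact V.finite_toSet.isCompact_convexHull (𝕜 := ℝ)

/-- Minimizer among extreme points. -/
theorem exists_ext_min {n : ℕ} {P : Set (Fin n → ℝ)} (hc : IsCompact P)
    (hne : P.Nonempty) (u : (Fin n → ℝ) →ₗ[ℝ] ℝ) :
    ∃ v ∈ Set.extremePoints ℝ P, ∀ x ∈ P, u v ≤ u x := by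
  have hcu := u.continuous_of_finiteDimensional
  obtain ⟨x0, hx0, hmin⟩ := hc.exists_isMinOn hne hcu.continuousOn
  have hmin' : ∀ x ∈ P, u x0 ≤ u x := fun x hx => hmin hx
  have hF : IsFace P {x ∈ P | u x = u x0} := ⟨⟨x0, hx0, rfl⟩, u, u x0, hmin', rfl⟩
  have hFc : IsCompact {x ∈ P | u x = u x0} :=
    hc.inter_right (isClosed_eq hcu continuous_const)
  obtain ⟨v, hv⟩ := hFc.extremePoints_nonempty hF.1
  refine ⟨v, ext_of_face hF hv, fun x hx => ?_⟩
  rw [hv.1.2]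
  exact hmin' x hx

theorem hfail_of {n : ℕ} {P : Set (Fin n → ℝ)} (hP : IsLatticePolytope P)
    (hfull : affineSpan ℝ P = ⊤) (hsm : IsSmoothPoly P) (s : ℕ) (hs : 0 < s)
    (hno : ¬ HasInteriorLatticePt P s) (z : Fin n → ℤ) :
    ∃ r b, IsFac P r b ∧ r ⬝ᵥ z + (s : ℤ) * b ≤ 0 := by
  classical
  have hconv := latticePoly_convex hP
  have hPne : P.Nonempty := by
    rw [← affineSpan_nonempty ℝ, hfull]; exact ⟨0, trivial⟩
  have hsR : (0 : ℝ) < s := by exact_mod_cast hs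
  have hintr : (interior ((s : ℝ) • P)).Nonempty := by
    rw [interior_smul₀ hsR.ne']
    exact ((hconv.interior_nonempty_iff_affineSpan_eq_top).mpr hfull).smul_set
  have hz : zc z ∉ interior ((s : ℝ) • P) := fun h => hno ⟨_, h, fun i => ⟨z i, rfl⟩⟩
  obtain ⟨f, hf⟩ := geometric_hahn_banach_point_open ((hconv.smul (s : ℝ)).interior) isOpen_interior hz
  let u : (Fin n → ℝ) →ₗ[ℝ] ℝ := f.toLinearMap
  have hle : ∀ x ∈ P, u (zc z) ≤ s * u x := by
    intro x hx
    have h1 : (s : ℝ) • x ∈ closure (interior ((s : ℝ) • P)) := by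
      rw [(hconv.smul (s : ℝ)).closure_interior_eq_closure_of_nonempty_interior hintr]
      exact subset_closure (Set.smul_mem_smul_set hx)
    have hcl : IsClosed {x | u (zc z) ≤ u x} := isClosed_le continuous_const f.continuous
    have h2 := (closure_minimal (fun y hy => (hf y hy).le) hcl : _ ⊆ {x | u (zc z) ≤ u x}) h1
    simpa using h2
  obtain ⟨y0, hy0⟩ := hintr
  have hu0 : u (zc z) < u y0 := hf y0 hy0
  obtain ⟨x, hx, hxmin⟩ := exists_ext_min (latticePoly_compact hP) hPne u
  obtain ⟨v, w, a, l, rfl, h⟩ := exists_VD hP hfull hsm x hx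
  have huw : ∀ i, 0 ≤ u (zc (w i)) := by
    intro i
    have := hxmin _ (h.step i)
    rw [zc_add, map_add] at this
    linarith
  obtain ⟨i, hi⟩ : ∃ i, a i ⬝ᵥ (z - (s : ℤ) • v) ≤ 0 := by
    by_contra hcon
    push Not at hcon
    have h1 : ∀ y, u y = ∑ i, iprod (a i) y * u (zc (w i)) := by
      intro y
      conv_lhs => rw [VD.expand_real h.dual y]
      rw [map_sum]; simp
    have h2 : u (zc (z - (s : ℤ) • v)) ≤ 0 := by
      rw [zc_sub, zc_smul, map_sub, map_smul, smul_eq_mul]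
      have := hle _ hx.1
      push_cast; linarith
    rw [h1] at h2
    have h3 : ∀ i ∈ Finset.univ, 0 ≤ iprod (a i) (zc (z - (s : ℤ) • v)) * u (zc (w i)) := by
      intro i _
      rw [iprod_zc]
      exact mul_nonneg (by exact_mod_cast (hcon i).le) (huw i)
    have h4 := (Finset.sum_eq_zero_iff_of_nonneg h3).mp (le_antisymm h2 (Finset.sum_nonneg h3))
    have h5 : ∀ i, u (zc (w i)) = 0 := by
      intro i
      rcases mul_eq_zero.mp (h4 i (Finset.mem_univ _)) with q | q
      · rw [iprod_zc] at q
        have q' : a i ⬝ᵥ (z - (s : ℤ) • v) = 0 := by exact_mod_cast q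
        have := hcon i
        omega
      · exact q
    have h6 : ∀ y, u y = 0 := by intro y; rw [h1]; simp [h5]
    rw [h6, h6] at hu0
    exact lt_irrefl _ hu0
  refine ⟨a i, _, h.isFac i, ?_⟩
  rw [dotProduct_sub, dotProduct_smul, smul_eq_mul] at hi
  linarith



theorem mem_tr {n : ℕ} {d x : Fin n → ℝ} {P : Set (Fin n → ℝ)} : x ∈ d +ᵥ P ↔ x - d ∈ P := by
  rw [Set.mem_vadd_set_iff_neg_vadd_mem, vadd_eq_add, neg_add_eq_sub]

theorem ext_tr {n : ℕ} {d x : Fin n → ℝ} {P : Set (Fin n → ℝ)}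
    (h : x ∈ Set.extremePoints ℝ P) : x + d ∈ Set.extremePoints ℝ (d +ᵥ P) := by
  rw [mem_extremePoints] at h ⊢
  refine ⟨by rw [mem_tr]; simpa using h.1, fun y hy z hz ho => ?_⟩
  rw [mem_tr] at hy hz
  have := h.2 _ hy _ hz (by
    rw [← mem_openSegment_translate ℝ d]
    simpa [add_comm] using ho)
  exact ⟨by rw [← this.1]; simp, by rw [← this.2]; simp⟩

theorem vectorSpan_tr {n : ℕ} (d : Fin n → ℝ) (F : Set (Fin n → ℝ)) :
    vectorSpan ℝ (d +ᵥ F) = vectorSpan ℝ F := by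
  rw [vectorSpan_def, vectorSpan_def]
  congr 1
  ext x
  simp only [Set.mem_vsub, mem_tr, vsub_eq_sub]
  constructor
  · rintro ⟨y, hy, z, hz, rfl⟩
    exact ⟨_, hy, _, hz, by abel⟩
  · rintro ⟨y, hy, z, hz, rfl⟩
    exact ⟨y + d, by simpa using hy, z + d, by simpa using hz, by abel⟩

theorem face_tr {n : ℕ} (d : Fin n → ℝ) {P F : Set (Fin n → ℝ)} (h : IsFace P F) :
    IsFace (d +ᵥ P) (d +ᵥ F) := by
  obtain ⟨hne, u, c, hc, rfl⟩ := h
  refine ⟨hne.vadd_set, u, c + u d, fun x hx => ?_, ?_⟩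
  · have := hc _ (mem_tr.mp hx)
    rw [map_sub] at this
    linarith
  · ext x
    simp only [mem_tr, Set.mem_sep_iff, map_sub]
    constructor
    · rintro ⟨h1, h2⟩; exact ⟨h1, by linarith⟩
    · rintro ⟨h1, h2⟩; exact ⟨h1, by linarith⟩

theorem VD.tr {n : ℕ} {P : Set (Fin n → ℝ)} {v : Fin n → ℤ} {w a : Fin n → Fin n → ℤ}
    {l : Fin n → ℤ} (h : VD P v w a l) (d : Fin n → ℤ) : VD (zc d +ᵥ P) (v + d) w a l where
  ext := by rw [zc_add]; exact ext_tr h.ext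
  dual := h.dual
  nonneg x hx i := by
    have := h.nonneg _ (mem_tr.mp hx) i
    rw [iprod_sub, iprod_zc] at this
    rw [dotProduct_add]; push_cast; linarith
  step i := by
    rw [mem_tr, ← zc_sub]
    have : v + d + w i - d = v + w i := by abel
    rw [this]; exact h.step i
  lpos := h.lpos
  nbr i := by
    have : v + d + l i • w i = v + l i • w i + d := by abel
    rw [this, zc_add]; exact ext_tr (h.nbr i)
  edge F := by
    have e1 : ∀ i, segment ℝ (zc (v + d)) (zc (v + d + l i • w i)) =
        zc d +ᵥ segment ℝ (zc v) (zc (v + l i • w i)) := by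
      intro i
      rw [vadd_segment, vadd_eq_add, vadd_eq_add, ← zc_add, ← zc_add]
      congr 2 <;> abel
    have e2 : zc d +ᵥ (-zc d +ᵥ F) = F := by rw [vadd_vadd]; simp
    have e3 := h.edge (-zc d +ᵥ F)
    constructor
    · rintro ⟨h1, h2, h3⟩
      obtain ⟨i, hi⟩ := e3.mp ⟨by
          have := face_tr (-zc d) h1
          rwa [vadd_vadd, neg_add_cancel, zero_vadd] at this, by
          rw [mem_tr, sub_neg_eq_add, ← zc_add]; exact h2, by
          rw [fdim, vectorSpan_tr]; exact h3⟩
      exact ⟨i, by rw [e1, ← hi, e2]⟩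
    · rintro ⟨i, hi⟩
      obtain ⟨h1, h2, h3⟩ := e3.mpr ⟨i, by rw [hi, e1, vadd_vadd, neg_add_cancel, zero_vadd]⟩
      refine ⟨by have := face_tr (zc d) h1; rwa [e2] at this, ?_, ?_⟩
      · rw [mem_tr, sub_neg_eq_add, ← zc_add] at h2; exact h2
      · rw [fdim, vectorSpan_tr] at h3; exact h3

theorem IsFac.tr {n : ℕ} {P : Set (Fin n → ℝ)} {r : Fin n → ℤ} {b : ℤ} (h : IsFac P r b)
    (d : Fin n → ℤ) : IsFac (zc d +ᵥ P) r (b - r ⬝ᵥ d) where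
  nonneg x hx := by
    have := h.nonneg _ (mem_tr.mp hx)
    rw [iprod_sub, iprod_zc] at this
    push_cast; linarith
  prim := h.prim
  uniq r' d' hr' := by
    obtain ⟨m, hm1, hm2⟩ := h.uniq r' (d' + r' ⬝ᵥ d) (by
      intro x hx h0
      have := hr' (x + zc d) (by rw [mem_tr]; simpa using hx) (by
        rw [iprod_add, iprod_zc]; push_cast; linarith)
      rw [iprod_add, iprod_zc] at this
      push_cast; linarith)
    refine ⟨m, hm1, ?_⟩
    rw [hm1, smul_dotProduct, smul_eq_mul] at hm2
    linarith

theorem lattice_tr {n : ℕ} {P : Set (Fin n → ℝ)} (h : IsLatticePolytope P) (d : Fin n → ℤ) :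
    IsLatticePolytope (zc d +ᵥ P) := by
  classical
  obtain ⟨V, hV, rfl⟩ := h
  refine ⟨V.image (fun x => zc d + x), ?_, ?_⟩
  · intro x hx
    obtain ⟨y, hy, rfl⟩ := Finset.mem_image.mp hx
    intro i
    obtain ⟨z, hz⟩ := hV y hy i
    exact ⟨d i + z, by simp [zc, hz]⟩
  · rw [← convexHull_vadd]
    congr 1
    ext x
    simp only [Finset.coe_image, Set.mem_image, Finset.mem_coe, Set.mem_vadd_set, vadd_eq_add]

/-- Vertex data adapted to a face `R` of `Q` through the vertex. -/
structure PVD {n : ℕ} (Q R : Set (Fin n → ℝ)) (v : Fin n → ℤ) (w a : Fin n → Fin n → ℤ)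
    (l : Fin n → ℤ) (L : Finset (Fin n)) : Prop where
  vd : VD Q v w a l
  mem : ∀ x, x ∈ R ↔ x ∈ Q ∧ ∀ i, i ∉ L → iprod (a i) x = ((a i ⬝ᵥ v : ℤ) : ℝ)

theorem PVD.step {n : ℕ} {Q R : Set (Fin n → ℝ)} {v : Fin n → ℤ} {w a : Fin n → Fin n → ℤ}
    {l : Fin n → ℤ} {L : Finset (Fin n)} (h : PVD Q R v w a l L) {m : Fin n} (hm : m ∈ L) :
    zc (v + w m) ∈ R := by
  rw [h.mem]
  refine ⟨h.vd.step m, fun i hi => ?_⟩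
  have : i ≠ m := by rintro rfl; exact hi hm
  rw [iprod_zc, dotProduct_add, h.vd.dual, if_neg this, add_zero]

theorem PVD.self {n : ℕ} {Q R : Set (Fin n → ℝ)} {v : Fin n → ℤ} {w a : Fin n → Fin n → ℤ}
    {l : Fin n → ℤ} {L : Finset (Fin n)} (h : PVD Q R v w a l L) : zc v ∈ R := by
  rw [h.mem]
  exact ⟨h.vd.mem, fun i _ => iprod_zc _ _⟩

theorem PVD.expand {n : ℕ} {Q R : Set (Fin n → ℝ)} {v : Fin n → ℤ} {w a : Fin n → Fin n → ℤ}
    {l : Fin n → ℤ} {L : Finset (Fin n)} (h : PVD Q R v w a l L) {x : Fin n → ℝ} (hx : x ∈ R) :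
    x - zc v = ∑ m ∈ L, (iprod (a m) x - ((a m ⬝ᵥ v : ℤ) : ℝ)) • zc (w m) := by
  conv_lhs => rw [VD.expand_real h.vd.dual (x - zc v)]
  simp only [iprod_sub, iprod_zc]
  symm
  apply Finset.sum_subset (Finset.subset_univ L)
  intro i _ hi
  rw [((h.mem x).mp hx).2 i hi, sub_self, zero_smul]

theorem PVD.argmin {n : ℕ} {Q R : Set (Fin n → ℝ)} {v : Fin n → ℤ} {w a : Fin n → Fin n → ℤ}
    {l : Fin n → ℤ} {L : Finset (Fin n)} (h : PVD Q R v w a l L) (u : (Fin n → ℝ) →ₗ[ℝ] ℝ) :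
    (∀ y ∈ R, u (zc v) ≤ u y) ↔ ∀ m ∈ L, 0 ≤ u (zc (w m)) := by
  constructor
  · intro hu m hm
    have := hu _ (h.step hm)
    rw [zc_add, map_add] at this
    linarith
  · intro hu y hy
    have h1 := congrArg u (h.expand hy)
    rw [map_sub, map_sum] at h1
    have h2 : 0 ≤ ∑ m ∈ L, u ((iprod (a m) y - ((a m ⬝ᵥ v : ℤ) : ℝ)) • zc (w m)) := by
      apply Finset.sum_nonneg
      intro m hm
      rw [map_smul, smul_eq_mul]
      exact mul_nonneg (by linarith [h.vd.nonneg y ((h.mem y).mp hy).1 m]) (hu m hm)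
    linarith

theorem PVD.vectorSpan {n : ℕ} {Q R : Set (Fin n → ℝ)} {v : Fin n → ℤ}
    {w a : Fin n → Fin n → ℤ}
    {l : Fin n → ℤ} {L : Finset (Fin n)} (h : PVD Q R v w a l L) :
    vectorSpan ℝ R = Submodule.span ℝ (Set.range fun m : L => zc (w m)) := by
  apply le_antisymm
  · rw [vectorSpan_eq_span_vsub_set_right ℝ h.self, Submodule.span_le]
    rintro _ ⟨x, hx, rfl⟩
    simp only [vsub_eq_sub]
    rw [h.expand hx]
    exact Submodule.sum_mem _ fun m hm =>
      Submodule.smul_mem _ _ (Submodule.subset_span ⟨⟨m, hm⟩, rfl⟩)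
  · rw [Submodule.span_le]
    rintro _ ⟨m, rfl⟩
    have := vsub_mem_vectorSpan ℝ (h.step m.2) h.self
    rw [vsub_eq_sub, zc_add, add_sub_cancel_left] at this
    exact this

theorem VD.linInd {n : ℕ} {w a : Fin n → Fin n → ℤ}
    (h : ∀ i j, a i ⬝ᵥ w j = if i = j then 1 else 0) :
    LinearIndependent ℝ (fun i => zc (w i)) := by
  rw [Fintype.linearIndependent_iff]
  intro g hg i
  have := congrArg (iprod (a i)) hg
  rw [iprod_sum_right, iprod_zero] at this
  simpa [iprod_smul, iprod_zc, h] using this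

theorem PVD.face {n : ℕ} {Q R : Set (Fin n → ℝ)} {v : Fin n → ℤ}
    {w a : Fin n → Fin n → ℤ}
    {l : Fin n → ℤ} {L : Finset (Fin n)} (h : PVD Q R v w a l L) {F : Set (Fin n → ℝ)}
    (hF : IsFace R F) (hv : zc v ∈ F) : IsFace Q F := by
  classical
  obtain ⟨hne, u, c, hc, rfl⟩ := hF
  have hvc : u (zc v) = c := hv.2
  have hu : ∀ m ∈ L, 0 ≤ u (zc (w m)) := (h.argmin u).mp (fun y hy => by rw [hvc]; exact hc y hy)
  let g : Fin n → ℝ := fun m => if m ∈ L then u (zc (w m)) else 1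
  have hg : ∀ m, 0 ≤ g m := by
    intro m; simp only [g]; split_ifs with hm
    · exact hu m hm
    · exact zero_le_one
  let u' : (Fin n → ℝ) →ₗ[ℝ] ℝ := ∑ m, g m • iprodL (a m)
  have hu' : ∀ x, u' x - u' (zc v) = ∑ m, g m * (iprod (a m) x - ((a m ⬝ᵥ v : ℤ) : ℝ)) := by
    intro x
    simp only [u', LinearMap.sum_apply, LinearMap.smul_apply, smul_eq_mul, iprodL_apply, iprod_zc,
      mul_sub, Finset.sum_sub_distrib]
  have hnn : ∀ x ∈ Q, ∀ m ∈ Finset.univ, 0 ≤ g m * (iprod (a m) x - ((a m ⬝ᵥ v : ℤ) : ℝ)) :=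
    fun x hx m _ => mul_nonneg (hg m) (by linarith [h.vd.nonneg x hx m])
  have hRu : ∀ x ∈ R, u' x - u' (zc v) = u x - c := by
    intro x hx
    rw [hu', ← hvc, ← map_sub, h.expand hx, map_sum]
    symm
    rw [← Finset.sum_subset (Finset.subset_univ L)]
    · apply Finset.sum_congr rfl
      intro m hm
      simp only [g, if_pos hm, map_smul, smul_eq_mul]
      ring
    · intro m _ hm
      rw [((h.mem x).mp hx).2 m hm, sub_self, mul_zero]
  refine ⟨hne, u', u' (zc v), ?_, ?_⟩
  · intro x hx
    have := Finset.sum_nonneg (hnn x hx)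
    rw [← hu'] at this
    linarith
  · ext x
    constructor
    · rintro ⟨hxR, hxc⟩
      refine ⟨((h.mem x).mp hxR).1, ?_⟩
      have := hRu x hxR
      linarith
    · rintro ⟨hxQ, hx⟩
      have h0 : ∑ m, g m * (iprod (a m) x - ((a m ⬝ᵥ v : ℤ) : ℝ)) = 0 := by
        rw [← hu']; linarith
      have h1 := (Finset.sum_eq_zero_iff_of_nonneg (hnn x hxQ)).mp h0
      have hxR : x ∈ R := by
        rw [h.mem]
        refine ⟨hxQ, fun i hi => ?_⟩
        have := h1 i (Finset.mem_univ _)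
        simp only [g, if_neg hi] at this
        linarith
      refine ⟨hxR, ?_⟩
      have := hRu x hxR
      linarith

theorem smooth_of_PVD {n : ℕ} {Q R : Set (Fin n → ℝ)}
    (H : ∀ x ∈ Set.extremePoints ℝ R, ∃ v w a l L, x = zc v ∧ PVD Q R v w a l L) :
    IsSmoothPoly R := by
  classical
  intro x hx
  obtain ⟨v, w, a, l, L, rfl, h⟩ := H x hx
  have hli := VD.linInd h.vd.dual
  have hliL : LinearIndependent ℝ (fun m : L => zc (w m)) := hli.comp _ Subtype.val_injective
  have hd : fdim R = L.card := by
    rw [fdim, h.vectorSpan, finrank_span_eq_card hliL, Fintype.card_coe]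
  let e : Fin (fdim R) ≃ L := (finCongr hd).trans L.equivFin.symm
  refine ⟨fun i => w (e i), fun i => (l (e i) : ℝ), ?_, ?_, ?_, ?_, ?_, ?_⟩
  · intro i
    have := h.vd.lpos (e i)
    have h2 : 0 < l (e i) := by omega
    change (0 : ℝ) < (l (e i) : ℝ)
    exact_mod_cast h2
  · intro i
    have h1 : a (e i) ⬝ᵥ w (e i) = 1 := by rw [h.vd.dual, if_pos rfl]
    refine ⟨fun h0 => ?_, fun d hd => ?_⟩
    · change w (e i) = 0 at h0
      rw [h0] at h1; simp at h1
    · apply isUnit_of_dvd_one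
      rw [← h1]
      exact Finset.dvd_sum fun j _ => Dvd.dvd.mul_left (hd j) _
  · exact hliL.comp e e.injective
  · intro i
    rw [h.vectorSpan]
    exact Submodule.subset_span ⟨e i, rfl⟩
  · intro z hz
    change zc z ∈ _ at hz
    refine ⟨fun i => a (e i) ⬝ᵥ z, ?_⟩
    change zc z = ∑ i, ((a (e i) ⬝ᵥ z : ℤ) : ℝ) • zc (w (e i))
    rw [e.sum_comp (fun m : L => ((a m ⬝ᵥ z : ℤ) : ℝ) • zc (w m)),
      Finset.sum_coe_sort L (fun m => ((a m ⬝ᵥ z : ℤ) : ℝ) • zc (w m))]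
    conv_lhs => rw [VD.expand_real h.vd.dual (zc z)]
    simp only [iprod_zc]
    symm
    apply Finset.sum_subset (Finset.subset_univ L)
    intro m _ hm
    have : iprod (a m) (zc z) = 0 := by
      have hle : vectorSpan ℝ R ≤ LinearMap.ker (iprodL (a m)) := by
        rw [h.vectorSpan, Submodule.span_le]
        rintro _ ⟨k, rfl⟩
        have hne : m ≠ k := by rintro rfl; exact hm k.2
        simp [iprodL_apply, iprod_zc, h.vd.dual, hne]
      exact hle hz
    rw [iprod_zc] at this
    rw [this, zero_smul]
  · intro F
    have hseg : ∀ i, zc v + (l i : ℝ) • zc (w i) = zc (v + l i • w i) := by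
      intro i; rw [zc_add, zc_smul]
    change _ ↔ ∃ i, F = segment ℝ (zc v) (zc v + (l (e i) : ℝ) • zc (w (e i)))
    simp only [hseg]
    constructor
    · rintro ⟨hF, hvF, hd1⟩
      obtain ⟨i, hi⟩ := (h.vd.edge F).mp ⟨h.face hF hvF, hvF, hd1⟩
      have hiL : i ∈ L := by
        by_contra hcon
        have h1 : zc (v + l i • w i) ∈ R := by
          have : zc (v + l i • w i) ∈ F := by rw [hi]; exact right_mem_segment _ _ _
          obtain ⟨-, u, c, hc, rfl⟩ := hF
          exact this.1
        have h2 := ((h.mem _).mp h1).2 i hcon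
        rw [iprod_zc, dotProduct_add, dotProduct_smul, h.vd.dual, if_pos rfl] at h2
        have h3 : a i ⬝ᵥ v + l i • 1 = a i ⬝ᵥ v := by exact_mod_cast h2
        have := h.vd.lpos i
        simp at h3
        omega
      exact ⟨e.symm ⟨i, hiL⟩, by simpa using hi⟩
    · rintro ⟨i, hi⟩
      obtain ⟨hF, hvF, hd1⟩ := (h.vd.edge F).mpr ⟨e i, hi⟩
      refine ⟨?_, hvF, hd1⟩
      have hFR : F ⊆ R := by
        intro y hy
        have hyQ : y ∈ Q := by
          obtain ⟨-, u, c, hc, hFe⟩ := hF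
          rw [hFe] at hy; exact hy.1
        rw [h.mem]
        refine ⟨hyQ, fun k hk => ?_⟩
        have hne : k ≠ e i := by intro hh; rw [hh] at hk; exact hk (e i).2
        rw [hi, segment_eq_image'] at hy
        obtain ⟨θ, -, rfl⟩ := hy
        simp only [zc_add, zc_smul, add_sub_cancel_left, iprod_add, iprod_smul, iprod_zc,
          h.vd.dual, if_neg hne]
        simp
      obtain ⟨hne, u, c, hc, hFe⟩ := hF
      refine ⟨hne, u, c, fun y hy => hc y ((h.mem y).mp hy).1, ?_⟩
      ext y
      constructor
      · intro hy
        refine ⟨hFR hy, ?_⟩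
        rw [hFe] at hy; exact hy.2
      · rintro ⟨hyR, hyc⟩
        rw [hFe]
        exact ⟨((h.mem y).mp hyR).1, hyc⟩

theorem argmin_eq {n : ℕ} {R : Set (Fin n → ℝ)} (hc : IsCompact R) (hconv : Convex ℝ R)
    (u v : (Fin n → ℝ) →ₗ[ℝ] ℝ)
    (h : ∀ x ∈ Set.extremePoints ℝ R, (∀ y ∈ R, u x ≤ u y) → ∀ y ∈ R, v x ≤ v y) :
    {x ∈ R | ∀ y ∈ R, u x ≤ u y} ⊆ {x ∈ R | ∀ y ∈ R, v x ≤ v y} := by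
  rintro x ⟨hxR, hx⟩
  have hcu := u.continuous_of_finiteDimensional
  have hcv := v.continuous_of_finiteDimensional
  have hF : IsFace R {z ∈ R | u z = u x} := ⟨⟨x, hxR, rfl⟩, u, u x, hx, rfl⟩
  have hFc : IsCompact {z ∈ R | u z = u x} := hc.inter_right (isClosed_eq hcu continuous_const)
  have hFconv : Convex ℝ {z ∈ R | u z = u x} := hconv.inter (convex_hyperplane u.isLinear _)
  refine ⟨hxR, fun y hy => ?_⟩
  have hxF : x ∈ {z ∈ R | u z = u x} := ⟨hxR, rfl⟩
  rw [← closure_convexHull_extremePoints hFc hFconv] at hxF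
  have hcl : IsClosed {z | v z ≤ v y} := isClosed_le hcv continuous_const
  have hcx : Convex ℝ {z | v z ≤ v y} := convex_halfSpace_le v.isLinear _
  refine (closure_minimal (convexHull_min ?_ hcx) hcl : _ ⊆ {z | v z ≤ v y}) hxF
  intro z hz
  refine h z (ext_of_face hF hz) (fun y' hy' => ?_) y hy
  rw [hz.1.2]
  exact hx y' hy'

theorem normEquiv_half {n : ℕ} {R S : Set (Fin n → ℝ)} (hc : IsCompact R) (hconv : Convex ℝ R)
    (H : ∀ x ∈ Set.extremePoints ℝ R, ∃ x' ∈ S, ∀ u : (Fin n → ℝ) →ₗ[ℝ] ℝ,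
      (∀ y ∈ R, u x ≤ u y) ↔ ∀ y ∈ S, u x' ≤ u y) (u v : (Fin n → ℝ) →ₗ[ℝ] ℝ)
    (h : {x ∈ S | ∀ y ∈ S, u x ≤ u y} = {x ∈ S | ∀ y ∈ S, v x ≤ v y}) :
    {x ∈ R | ∀ y ∈ R, u x ≤ u y} = {x ∈ R | ∀ y ∈ R, v x ≤ v y} := by
  apply Set.Subset.antisymm
  · apply argmin_eq hc hconv
    intro x hx hxu
    obtain ⟨x', hx', hh⟩ := H x hx
    rw [hh] at hxu ⊢
    have : x' ∈ {x ∈ S | ∀ y ∈ S, u x ≤ u y} := ⟨hx', hxu⟩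
    rw [h] at this
    exact this.2
  · apply argmin_eq hc hconv
    intro x hx hxu
    obtain ⟨x', hx', hh⟩ := H x hx
    rw [hh] at hxu ⊢
    have : x' ∈ {x ∈ S | ∀ y ∈ S, v x ≤ v y} := ⟨hx', hxu⟩
    rw [← h] at this
    exact this.2



/-- Facets forming a Cayley structure. -/
structure CS {n t : ℕ} (Q : Set (Fin n → ℝ)) (r : Fin (t + 1) → Fin n → ℤ)
    (b : Fin (t + 1) → ℤ) : Prop where
  fac : ∀ k, IsFac Q (r k) (b k)
  rsum : ∑ k, r k = 0
  bsum : ∑ k, b k = 1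
  pt : ∀ k, ∃ x ∈ Q, ∀ j, j ≠ k → iprod (r j) x + b j = 0

/-- The pieces. -/
def cpiece {n t : ℕ} (Q : Set (Fin n → ℝ)) (r : Fin (t + 1) → Fin n → ℤ)
    (b : Fin (t + 1) → ℤ) (k : Fin (t + 1)) : Set (Fin n → ℝ) :=
  {x ∈ Q | ∀ j, j ≠ k → iprod (r j) x + b j = 0}

theorem CS.sum1 {n t : ℕ} {Q : Set (Fin n → ℝ)} {r : Fin (t + 1) → Fin n → ℤ}
    {b : Fin (t + 1) → ℤ} (h : CS Q r b) (x : Fin n → ℝ) :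
    ∑ k, (iprod (r k) x + b k) = 1 := by
  rw [Finset.sum_add_distrib, ← iprod_sum_left, h.rsum]
  have : ((∑ k, b k : ℤ) : ℝ) = 1 := by rw [h.bsum]; simp
  push_cast at this
  rw [this]
  simp [iprod]

theorem CS.one {n t : ℕ} {Q : Set (Fin n → ℝ)} {r : Fin (t + 1) → Fin n → ℤ}
    {b : Fin (t + 1) → ℤ} (h : CS Q r b) {x : Fin n → ℝ} {k : Fin (t + 1)}
    (hx : ∀ j, j ≠ k → iprod (r j) x + b j = 0) : iprod (r k) x + b k = 1 := by
  rw [← h.sum1 x, Finset.sum_eq_single k]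
  · intro j _ hj; exact hx j hj
  · simp

theorem CS.nonneg_sum {n t : ℕ} {Q : Set (Fin n → ℝ)} {r : Fin (t + 1) → Fin n → ℤ}
    {b : Fin (t + 1) → ℤ} (h : CS Q r b) (k : Fin (t + 1)) :
    ∃ (u : (Fin n → ℝ) →ₗ[ℝ] ℝ) (c : ℝ), (∀ x ∈ Q, c ≤ u x) ∧
      cpiece Q r b k = {x ∈ Q | u x = c} := by
  classical
  let u : (Fin n → ℝ) →ₗ[ℝ] ℝ := ∑ j ∈ Finset.univ.erase k, iprodL (r j)
  let c : ℝ := -∑ j ∈ Finset.univ.erase k, (b j : ℝ)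
  have hu : ∀ x, u x - c = ∑ j ∈ Finset.univ.erase k, (iprod (r j) x + b j) := by
    intro x
    simp only [u, c, LinearMap.sum_apply, iprodL_apply, Finset.sum_add_distrib]
    ring
  have hnn : ∀ x ∈ Q, ∀ j ∈ Finset.univ.erase k, 0 ≤ iprod (r j) x + b j :=
    fun x hx j _ => (h.fac j).nonneg x hx
  refine ⟨u, c, fun x hx => ?_, ?_⟩
  · have := Finset.sum_nonneg (hnn x hx)
    rw [← hu] at this
    linarith
  · ext x
    constructor
    · rintro ⟨hxQ, hx⟩
      refine ⟨hxQ, ?_⟩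
      have : u x - c = 0 := by
        rw [hu]; exact Finset.sum_eq_zero fun j hj => hx j (by simpa using hj)
      linarith
    · rintro ⟨hxQ, hx⟩
      refine ⟨hxQ, fun j hj => ?_⟩
      have h0 : ∑ j ∈ Finset.univ.erase k, (iprod (r j) x + b j) = 0 := by
        rw [← hu]; linarith
      exact (Finset.sum_eq_zero_iff_of_nonneg (hnn x hxQ)).mp h0 j (by simpa using hj)

theorem CS.isFace {n t : ℕ} {Q : Set (Fin n → ℝ)} {r : Fin (t + 1) → Fin n → ℤ}
    {b : Fin (t + 1) → ℤ} (h : CS Q r b) (k : Fin (t + 1)) : IsFace Q (cpiece Q r b k) := by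
  obtain ⟨u, c, h1, h2⟩ := h.nonneg_sum k
  obtain ⟨x, hxQ, hx⟩ := h.pt k
  exact ⟨⟨x, hxQ, hx⟩, u, c, h1, h2⟩

theorem CS.lattice {n t : ℕ} {Q : Set (Fin n → ℝ)} {r : Fin (t + 1) → Fin n → ℤ}
    {b : Fin (t + 1) → ℤ} (h : CS Q r b) (hQ : IsLatticePolytope Q) (k : Fin (t + 1)) :
    IsLatticePolytope (cpiece Q r b k) := by
  classical
  obtain ⟨u, c, h1, h2⟩ := h.nonneg_sum k
  obtain ⟨V, hV, rfl⟩ := hQ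
  rw [h2, face_hull V u c (fun v hv => h1 v (subset_convexHull ℝ _ hv))]
  exact ⟨_, fun v hv => hV v (Finset.mem_filter.mp hv).1, rfl⟩

/-- Adapted vertex data of a piece. -/
structure KVD {n t : ℕ} (Q : Set (Fin n → ℝ)) (r : Fin (t + 1) → Fin n → ℤ)
    (b : Fin (t + 1) → ℤ) (k : Fin (t + 1)) (v : Fin n → ℤ) (w a : Fin n → Fin n → ℤ)
    (l : Fin n → ℤ) (L : Finset (Fin n)) (π : Fin (t + 1) → Fin n) : Prop where
  pvd : PVD Q (cpiece Q r b k) v w a l L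
  req : ∀ j, j ≠ k → r j = a (π j)
  hL : ∀ i, i ∉ L ↔ ∃ j, j ≠ k ∧ i = π j

theorem CS.kvd {n t : ℕ} {Q : Set (Fin n → ℝ)} {r : Fin (t + 1) → Fin n → ℤ}
    {b : Fin (t + 1) → ℤ} (h : CS Q r b)
    (hV : ∀ x ∈ Set.extremePoints ℝ Q, ∃ v w a l, x = zc v ∧ VD Q v w a l)
    (k : Fin (t + 1)) (x : Fin n → ℝ) (hx : x ∈ Set.extremePoints ℝ (cpiece Q r b k)) :
    ∃ v w a l L π, x = zc v ∧ KVD Q r b k v w a l L π := by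
  classical
  obtain ⟨v, w, a, l, rfl, hv⟩ := hV _ (ext_of_face (h.isFace k) hx)
  have h0 : ∀ j, j ≠ k → r j ⬝ᵥ v + b j = 0 := by
    intro j hj
    have := hx.1.2 j hj
    rw [iprod_zc] at this
    exact_mod_cast this
  have hex : ∀ j, ∃ i, j ≠ k → r j = a i := by
    intro j
    by_cases hj : j = k
    · by_cases hn : Nonempty (Fin n)
      · exact ⟨hn.some, fun h => absurd hj h⟩
      · exfalso
        obtain ⟨z, hz⟩ := (h.fac k).prim
        have : IsEmpty (Fin n) := not_nonempty_iff.mp hn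
        simp [dotProduct] at hz
    · obtain ⟨i, hi⟩ := hv.fac_eq (h.fac j) (h0 j hj)
      exact ⟨i, fun _ => hi⟩
  choose π hπ using hex
  refine ⟨v, w, a, l, Finset.univ.filter (fun i => ¬ ∃ j, j ≠ k ∧ i = π j), π, rfl,
    ⟨hv, fun x => ?_⟩, hπ, fun i => by simp⟩
  constructor
  · rintro ⟨hxQ, hx⟩
    refine ⟨hxQ, fun i hi => ?_⟩
    obtain ⟨j, hj, rfl⟩ : ∃ j, j ≠ k ∧ i = π j := by simpa using hi
    rw [← hπ j hj]
    have h1 := hx j hj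
    have h2 : ((r j ⬝ᵥ v : ℤ) : ℝ) + b j = 0 := by exact_mod_cast h0 j hj
    linarith
  · rintro ⟨hxQ, hx⟩
    refine ⟨hxQ, fun j hj => ?_⟩
    have h1 := hx (π j) (by simpa using ⟨j, hj, rfl⟩)
    rw [← hπ j hj] at h1
    have h2 : ((r j ⬝ᵥ v : ℤ) : ℝ) + b j = 0 := by exact_mod_cast h0 j hj
    linarith

theorem CS.move {n t : ℕ} {Q : Set (Fin n → ℝ)} {r : Fin (t + 1) → Fin n → ℤ}
    {b : Fin (t + 1) → ℤ} (h : CS Q r b)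
    (hV : ∀ x ∈ Set.extremePoints ℝ Q, ∃ v w a l, x = zc v ∧ VD Q v w a l)
    {k k' : Fin (t + 1)} (hk : k' ≠ k) {v : Fin n → ℤ} {w a : Fin n → Fin n → ℤ}
    {l : Fin n → ℤ} {L : Finset (Fin n)} {π : Fin (t + 1) → Fin n}
    (H : KVD Q r b k v w a l L π) :
    ∃ v' w' a' l', PVD Q (cpiece Q r b k') v' w' a' l' L ∧ ∀ m ∈ L, w' m = w m := by
  classical
  have hself := H.pvd.self
  have h0 : ∀ j, j ≠ k → r j ⬝ᵥ v + b j = 0 := by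
    intro j hj
    have := hself.2 j hj
    rw [iprod_zc] at this
    exact_mod_cast this
  have h1 : r k ⬝ᵥ v + b k = 1 := by
    have := h.one hself.2
    rw [iprod_zc] at this
    exact_mod_cast this
  have hinj : ∀ j, j ≠ k → ∀ j', j' ≠ k → π j = π j' → j = j' := by
    intro j hj j' hj' he
    by_contra hne
    have e1 : r j = r j' := by rw [H.req j hj, H.req j' hj', he]
    have e2 : b j = b j' := by
      have := h0 j hj
      have := h0 j' hj'
      rw [e1] at *
      linarith
    obtain ⟨x, hxQ, hx⟩ := h.pt j
    have e3 := h.one hx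
    have e4 := hx j' (Ne.symm hne)
    rw [e1, e2] at e3
    linarith
  have hdual := H.pvd.vd.dual
  have hrk : ∀ m, r k ⬝ᵥ w m = -∑ j ∈ Finset.univ.erase k, if π j = m then 1 else 0 := by
    intro m
    have e : r k = -∑ j ∈ Finset.univ.erase k, r j := by
      have := h.rsum
      rw [← Finset.add_sum_erase _ _ (Finset.mem_univ k)] at this
      exact eq_neg_of_add_eq_zero_left this
    rw [e, neg_dotProduct, sum_dotProduct]
    congr 1
    apply Finset.sum_congr rfl
    intro j hj
    rw [H.req j (by simpa using hj), hdual]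
  have hrkL : ∀ m ∈ L, r k ⬝ᵥ w m = 0 := by
    intro m hm
    rw [hrk, Finset.sum_eq_zero, neg_zero]
    intro j hj
    rw [if_neg]
    rintro rfl
    exact ((H.hL _).mpr ⟨j, by simpa using hj, rfl⟩) hm
  have hrki : r k ⬝ᵥ w (π k') = -1 := by
    rw [hrk, Finset.sum_eq_single k']
    · simp
    · intro j hj hne
      rw [if_neg]
      intro he
      exact hne (hinj j (by simpa using hj) k' hk he)
    · intro hh; exact absurd (by simpa using hk) hh
  have hiL : π k' ∉ L := (H.hL _).mpr ⟨k', hk, rfl⟩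
  obtain ⟨w', a', l', β, h', ha', hw', hwi, hfi⟩ := H.pvd.vd.transit hV (π k')
  have hl1 : l (π k') = 1 := by
    have e1 := (h.fac k).nonneg_int h'.mem
    rw [dotProduct_add, dotProduct_smul, hrki, smul_eq_mul] at e1
    have := H.pvd.vd.lpos (π k')
    omega
  rw [hl1, one_smul] at h'
  have hrv : r k ⬝ᵥ (v + w (π k')) + b k = 0 := by
    rw [dotProduct_add, hrki]; linarith
  have hrka : r k = a' (π k') := by
    obtain ⟨m, hm⟩ := h'.fac_eq (h.fac k) hrv
    by_cases hmi : m = π k'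
    · rw [hm, hmi]
    · exfalso
      rw [hm, ha' m hmi, hdual, if_neg hmi] at hrki
      simp at hrki
  refine ⟨v + w (π k'), w', a', l', ⟨h', fun x => ?_⟩, fun m hm => ?_⟩
  · have hj0 : ∀ j, j ≠ k → j ≠ k' → r j ⬝ᵥ (v + w (π k')) + b j = 0 := by
      intro j hj hj'
      have e : r j ⬝ᵥ w (π k') = 0 := by
        rw [H.req j hj, hdual, if_neg]
        intro he; exact hj' (hinj j hj k' hk he)
      rw [dotProduct_add, e]; linarith [h0 j hj]
    constructor
    · rintro ⟨hxQ, hx⟩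
      refine ⟨hxQ, fun i hi => ?_⟩
      obtain ⟨j, hj, rfl⟩ := (H.hL i).mp hi
      by_cases hjk : j = k'
      · subst hjk
        rw [← hrka]
        have e1 := hx k (Ne.symm hk)
        have e2 : ((r k ⬝ᵥ (v + w (π j)) : ℤ) : ℝ) + b k = 0 := by exact_mod_cast hrv
        linarith
      · rw [ha' (π j) (fun he => hjk (hinj j hj k' hk he)), ← H.req j hj]
        have e1 := hx j hjk
        have e2 : ((r j ⬝ᵥ (v + w (π k')) : ℤ) : ℝ) + b j = 0 := by
          exact_mod_cast hj0 j hj hjk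
        linarith
    · rintro ⟨hxQ, hx⟩
      refine ⟨hxQ, fun j hj => ?_⟩
      by_cases hjk : j = k
      · rw [hjk]
        have e1 := hx _ hiL
        rw [← hrka] at e1
        have e2 : ((r k ⬝ᵥ (v + w (π k')) : ℤ) : ℝ) + b k = 0 := by exact_mod_cast hrv
        linarith
      · have e1 := hx (π j) ((H.hL _).mpr ⟨j, hjk, rfl⟩)
        rw [ha' (π j) (fun he => hj (hinj j hjk k' hk he)), ← H.req j hjk] at e1
        have e2 : ((r j ⬝ᵥ (v + w (π k')) : ℤ) : ℝ) + b j = 0 := by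
          exact_mod_cast hj0 j hjk hj
        linarith
  · have hmi : m ≠ π k' := by rintro rfl; exact hiL hm
    have e1 := h'.dual (π k') m
    rw [if_neg (Ne.symm hmi), ← hrka, hw' m hmi, dotProduct_add, dotProduct_smul, hrki,
      hrkL m hm, smul_eq_mul] at e1
    have e2 : β m = 0 := by linarith
    rw [hw' m hmi, e2, zero_smul, add_zero]

theorem CS.smooth {n t : ℕ} {Q : Set (Fin n → ℝ)} {r : Fin (t + 1) → Fin n → ℤ}
    {b : Fin (t + 1) → ℤ} (h : CS Q r b)
    (hV : ∀ x ∈ Set.extremePoints ℝ Q, ∃ v w a l, x = zc v ∧ VD Q v w a l)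
    (k : Fin (t + 1)) : IsSmoothPoly (cpiece Q r b k) := by
  apply smooth_of_PVD (Q := Q)
  intro x hx
  obtain ⟨v, w, a, l, L, π, rfl, H⟩ := h.kvd hV k x hx
  exact ⟨v, w, a, l, L, rfl, H.pvd⟩

theorem CS.corr {n t : ℕ} {Q : Set (Fin n → ℝ)} {r : Fin (t + 1) → Fin n → ℤ}
    {b : Fin (t + 1) → ℤ} (h : CS Q r b)
    (hV : ∀ x ∈ Set.extremePoints ℝ Q, ∃ v w a l, x = zc v ∧ VD Q v w a l)
    {k k' : Fin (t + 1)} (hk : k' ≠ k) :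
    ∀ x ∈ Set.extremePoints ℝ (cpiece Q r b k), ∃ x' ∈ cpiece Q r b k',
      ∀ u : (Fin n → ℝ) →ₗ[ℝ] ℝ,
      (∀ y ∈ cpiece Q r b k, u x ≤ u y) ↔ ∀ y ∈ cpiece Q r b k', u x' ≤ u y := by
  intro x hx
  obtain ⟨v, w, a, l, L, π, rfl, H⟩ := h.kvd hV k x hx
  obtain ⟨v', w', a', l', H', hw⟩ := h.move hV hk H
  refine ⟨zc v', H'.self, fun u => ?_⟩
  rw [H.pvd.argmin, H'.argmin]
  constructor
  · intro hh m hm; rw [hw m hm]; exact hh m hm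
  · intro hh m hm; rw [← hw m hm]; exact hh m hm

theorem CS.normEquiv {n t : ℕ} {Q : Set (Fin n → ℝ)} {r : Fin (t + 1) → Fin n → ℤ}
    {b : Fin (t + 1) → ℤ} (h : CS Q r b) (hQ : IsLatticePolytope Q)
    (hV : ∀ x ∈ Set.extremePoints ℝ Q, ∃ v w a l, x = zc v ∧ VD Q v w a l)
    (k k' : Fin (t + 1)) : NormEquiv (cpiece Q r b k) (cpiece Q r b k') := by
  by_cases hk : k' = k
  · subst hk; intro u v; rfl
  intro u v
  have c1 := h.lattice hQ k
  have c2 := h.lattice hQ k'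
  constructor
  · exact normEquiv_half (latticePoly_compact c2) (latticePoly_convex c2)
      (h.corr hV (Ne.symm hk)) u v
  · exact normEquiv_half (latticePoly_compact c1) (latticePoly_convex c1) (h.corr hV hk) u v

theorem CS.cayleyPiece_eq {n t : ℕ} {Q : Set (Fin n → ℝ)} {r : Fin (t + 1) → Fin n → ℤ}
    {b : Fin (t + 1) → ℤ} (h : CS Q r b) (hb : ∀ j : Fin t, b j.succ = 0)
    (k : Fin (t + 1)) :
    cayleyPiece (Matrix.of fun j : Fin t => r j.succ) Q k = cpiece Q r b k := by
  have hm : ∀ x j, matMap (Matrix.of fun j : Fin t => r j.succ) x j =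
      iprod (r j.succ) x + b j.succ := by
    intro x j
    rw [hb]; simp [matMap, iprod]
  ext x
  constructor
  · rintro ⟨hxQ, hx⟩
    refine ⟨hxQ, ?_⟩
    have hs : ∀ j : Fin t, iprod (r j.succ) x + b j.succ = if k = j.succ then 1 else 0 := by
      intro j
      rw [← hm, hx, stdSimplexVert]
      simp [Fin.ext_iff]
    intro j hj
    induction j using Fin.cases with
    | zero =>
      have h1 := h.sum1 x
      rw [Fin.sum_univ_succ] at h1
      simp only [hs] at h1
      obtain ⟨k0, rfl⟩ := Fin.exists_succ_eq.mpr (Ne.symm hj)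
      simp at h1
      linarith
    | succ j => rw [hs, if_neg (Ne.symm hj)]
  · rintro ⟨hxQ, hx⟩
    refine ⟨hxQ, ?_⟩
    ext j
    rw [hm, stdSimplexVert]
    by_cases hk : k = j.succ
    · rw [if_pos (by rw [hk]; simp), ← hk]
      exact h.one hx
    · rw [if_neg (by intro hh; exact hk (Fin.ext (by simpa using hh)))]
      exact hx _ (Ne.symm hk)

theorem CS.image {n t : ℕ} {Q : Set (Fin n → ℝ)} {r : Fin (t + 1) → Fin n → ℤ}
    {b : Fin (t + 1) → ℤ} (h : CS Q r b) (hconv : Convex ℝ Q) (hb : ∀ j : Fin t, b j.succ = 0) :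
    matMap (Matrix.of fun j : Fin t => r j.succ) '' Q = unimodSimplex t := by
  have hm : ∀ x j, matMap (Matrix.of fun j : Fin t => r j.succ) x j =
      iprod (r j.succ) x + b j.succ := by
    intro x j
    rw [hb]; simp [matMap, iprod]
  have hlin : IsLinearMap ℝ (matMap (Matrix.of fun j : Fin t => r j.succ)) := by
    constructor
    · intro x y; ext j; simp [hm, hb, iprod_add]
    · intro c x; ext j; simp [hm, hb, iprod_smul]
  apply Set.Subset.antisymm
  · rintro _ ⟨x, hx, rfl⟩
    have : matMap (Matrix.of fun j : Fin t => r j.succ) x =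
        ∑ k, (iprod (r k) x + b k) • stdSimplexVert t k := by
      ext j
      rw [hm, Finset.sum_apply, Finset.sum_eq_single j.succ]
      · simp [stdSimplexVert]
      · intro k _ hk
        rw [Pi.smul_apply, stdSimplexVert, if_neg, smul_zero]
        intro hh; exact hk (Fin.ext (by simpa using hh))
      · simp
    rw [this]
    exact (convex_convexHull ℝ _).sum_mem (fun k _ => (h.fac k).nonneg x hx) (h.sum1 x)
      (fun k _ => subset_convexHull ℝ _ ⟨k, rfl⟩)
  · refine convexHull_min ?_ (hconv.is_linear_image hlin)
    rintro _ ⟨k, rfl⟩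
    obtain ⟨x, hxQ, hx⟩ := h.pt k
    have : x ∈ cayleyPiece (Matrix.of fun j : Fin t => r j.succ) Q k := by
      rw [h.cayleyPiece_eq hb]; exact ⟨hxQ, hx⟩
    exact ⟨x, hxQ, this.2⟩

/-- Strict positivity of facets at interior lattice points of dilates. -/
theorem IsFac.pos_interior {n : ℕ} {P : Set (Fin n → ℝ)} {r : Fin n → ℤ} {b : ℤ}
    (h : IsFac P r b) (m : ℕ) {z : Fin n → ℤ} (hz : zc z ∈ interior ((m : ℝ) • P)) :
    1 ≤ r ⬝ᵥ z + m * b := by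
  have hall : ∀ x ∈ (m : ℝ) • P, 0 ≤ iprod r x + m * b := by
    rintro _ ⟨x, hx, rfl⟩
    have := h.nonneg x hx
    simp only [iprod_smul]
    have hm : (0 : ℝ) ≤ m := by positivity
    nlinarith
  obtain ⟨y, hy⟩ := h.prim
  have hcont : Continuous fun ε : ℝ => zc z - ε • zc y := by fun_prop
  have hnhds : ∀ᶠ ε in nhds (0 : ℝ), zc z - ε • zc y ∈ (m : ℝ) • P := by
    apply hcont.continuousAt.eventually
    simp only [zero_smul, sub_zero]
    exact mem_interior_iff_mem_nhds.mp hz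
  obtain ⟨δ, hδ, hball⟩ := Metric.eventually_nhds_iff.mp hnhds
  have h1 := hall _ (hball (y := δ / 2) (by rw [Real.dist_eq, sub_zero, abs_of_pos] <;> linarith))
  rw [iprod_sub, iprod_smul, iprod_zc, iprod_zc, hy] at h1
  have h2 : (0 : ℝ) < ((r ⬝ᵥ z + m * b : ℤ) : ℝ) := by push_cast at *; linarith
  have h3 : 0 < r ⬝ᵥ z + m * b := by exact_mod_cast h2
  omega

theorem codeg_ge {n t : ℕ} {P : Set (Fin n → ℝ)} {r : Fin (t + 1) → Fin n → ℤ}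
    {b : Fin (t + 1) → ℤ} (h : ∀ k, IsFac P (r k) (b k)) (hr : ∑ k, r k = 0)
    (hb : ∑ k, b k = 1) (hpos : 0 < codeg P) : t + 1 ≤ codeg P := by
  have hmem := Nat.sInf_mem (Nat.nonempty_of_pos_sInf hpos)
  obtain ⟨-, x, hx, hlat⟩ := hmem
  change x ∈ interior ((codeg P : ℝ) • P) at hx
  choose z hz using hlat
  have hxz : x = zc z := funext hz
  rw [hxz] at hx
  have h1 : ∑ k : Fin (t + 1), (1 : ℤ) ≤ ∑ k, (r k ⬝ᵥ z + codeg P * b k) :=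
    Finset.sum_le_sum fun k _ => (h k).pos_interior _ hx
  rw [Finset.sum_add_distrib, ← sum_dotProduct, hr, ← Finset.mul_sum, hb] at h1
  simp at h1
  omega

theorem stmt9_forward {n : ℕ} (P : Set (Fin n → ℝ)) (hP : IsLatticePolytope P)
    (hfull : affineSpan ℝ P = ⊤) (hsm : IsSmoothPoly P)
    (hcd : ((n : ℝ) + 3) / 2 ≤ (codeg P : ℝ)) :
      ∃ (t : ℕ) (U : Matrix (Fin n) (Fin n) ℤ) (w : Fin n → ℤ)
        (A : Matrix (Fin t) (Fin n) ℤ), IsUnit U.det ∧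
        IsCayleyWith (unimodMap U w '' P) A ∧
        (∀ k : Fin (t + 1),
          IsSmoothPoly (cayleyPiece A (unimodMap U w '' P) k) ∧
          IsLatticePolytope (cayleyPiece A (unimodMap U w '' P) k)) ∧
        t + 1 = codeg P ∧ (n : ℝ) / 2 < (t : ℝ) := by
  classical
  have hcd' : n + 3 ≤ 2 * codeg P := by
    have : (n : ℝ) + 3 ≤ 2 * (codeg P : ℝ) := by linarith
    exact_mod_cast this
  obtain ⟨s, hs⟩ : ∃ s, codeg P = s + 1 := ⟨codeg P - 1, by omega⟩
  have hs0 : 0 < s := by omega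
  have hno : ¬ HasInteriorLatticePt P s := by
    intro hh
    have : s ∉ {t : ℕ | 0 < t ∧ HasInteriorLatticePt P t} :=
      Nat.notMem_of_lt_sInf (by change s < codeg P; omega)
    exact this ⟨hs0, hh⟩
  have hPne : P.Nonempty := by
    rw [← affineSpan_nonempty ℝ, hfull]; exact ⟨0, trivial⟩
  have hV := exists_VD hP hfull hsm
  obtain ⟨v, w, a, l, N, hv, hfac, hN⟩ := step2 hV
    ((latticePoly_compact hP).extremePoints_nonempty hPne) s (by omega)
    (hfail_of hP hfull hsm s hs0 hno)
  obtain ⟨t, ht⟩ : ∃ t, N.card = t := ⟨_, rfl⟩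
  let e : Fin t ≃ N := (finCongr ht.symm).trans N.equivFin.symm
  have hesum : ∀ {M : Type} [AddCommMonoid M] (f : Fin n → M), ∑ j, f (e j) = ∑ i ∈ N, f i := by
    intro M _ f
    rw [e.sum_comp (fun m : N => f m), Finset.sum_coe_sort N f]
  let r : Fin (t + 1) → Fin n → ℤ := Fin.cons (-∑ i ∈ N, a i) (fun j => a (e j))
  let b : Fin (t + 1) → ℤ := Fin.cons (1 + ∑ i ∈ N, a i ⬝ᵥ v) (fun j => -(a (e j) ⬝ᵥ v))
  have hfacs : ∀ k, IsFac P (r k) (b k) := by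
    intro k
    induction k using Fin.cases with
    | zero => simpa [r, b] using hfac
    | succ j => simpa [r, b] using hv.isFac (e j)
  have hr : ∑ k, r k = 0 := by
    rw [Fin.sum_univ_succ]
    simp only [r, Fin.cons_zero, Fin.cons_succ]
    rw [hesum (fun i => a i)]; simp
  have hb : ∑ k, b k = 1 := by
    rw [Fin.sum_univ_succ]
    simp only [b, Fin.cons_zero, Fin.cons_succ]
    rw [hesum (fun i => -(a i ⬝ᵥ v)), Finset.sum_neg_distrib]; ring
  have hge := codeg_ge hfacs hr hb (by omega)
  let Q : Set (Fin n → ℝ) := zc (-v) +ᵥ P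
  let b' : Fin (t + 1) → ℤ := fun k => b k - r k ⬝ᵥ (-v)
  have hb' : ∀ j : Fin t, b' j.succ = 0 := by
    intro j; simp [b', b, r]
  have hb0 : b' 0 = 1 := by
    simp [b', b, r, sum_dotProduct]
  have hQV : ∀ x ∈ Set.extremePoints ℝ Q, ∃ v w a l, x = zc v ∧ VD Q v w a l := by
    intro x hx
    have h1 := ext_tr (d := -zc (-v)) hx
    have h2 : -zc (-v) +ᵥ Q = P := by simp only [Q]; rw [vadd_vadd]; simp
    rw [h2] at h1
    obtain ⟨v₁, w₁, a₁, l₁, e₁, h₁⟩ := hV _ h1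
    refine ⟨_, _, _, _, ?_, h₁.tr (-v)⟩
    rw [zc_add, ← e₁]; abel
  have hQ : IsLatticePolytope Q := lattice_tr hP _
  have hCS : CS Q r b' := by
    refine ⟨fun k => (hfacs k).tr (-v), hr, ?_, ?_⟩
    · rw [Fin.sum_univ_succ, hb0]; simp [hb']
    · intro k
      induction k using Fin.cases with
      | zero =>
        refine ⟨zc 0, ?_, ?_⟩
        · rw [mem_tr, ← zc_sub]; simpa using hv.mem
        · intro j hj
          obtain ⟨j, rfl⟩ := Fin.exists_succ_eq.mpr hj
          rw [hb', iprod_zc]; simp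
      | succ k =>
        refine ⟨zc (w (e k)), ?_, ?_⟩
        · rw [mem_tr, ← zc_sub]
          have := hv.step (e k)
          rwa [add_comm, ← sub_neg_eq_add] at this
        · intro j hj
          induction j using Fin.cases with
          | zero =>
            rw [hb0, iprod_zc]
            have : r 0 ⬝ᵥ w (e k) = -1 := by
              simp only [r, Fin.cons_zero]
              rw [neg_dotProduct, sum_dotProduct]
              simp [hv.dual]
            rw [this]; simp
          | succ j =>
            rw [hb', iprod_zc]
            have : r j.succ ⬝ᵥ w (e k) = 0 := by
              simp only [r, Fin.cons_succ]
              rw [hv.dual, if_neg]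
              intro hh
              exact hj (by rw [e.injective (Subtype.ext hh)])
            rw [this]; simp
  have hmap : unimodMap 1 (-v) '' P = Q := by
    ext x
    simp only [Q, Set.mem_image, Set.mem_vadd_set, vadd_eq_add]
    have : ∀ y, unimodMap 1 (-v) y = zc (-v) + y := by
      intro y; ext i
      simp [unimodMap, zc, Matrix.one_apply, add_comm]
    simp only [this]
  refine ⟨t, 1, -v, Matrix.of fun j : Fin t => r j.succ, by simp, ?_, ?_, ?_, ?_⟩
  · rw [hmap]
    refine ⟨?_, hCS.image (latticePoly_convex hQ) hb', ?_⟩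
    · intro y
      refine ⟨∑ k, y k • w (e k), ?_⟩
      ext j
      have : (Matrix.of fun j : Fin t => r j.succ).mulVec (∑ k, y k • w (e k)) j =
          a (e j) ⬝ᵥ ∑ k, y k • w (e k) := by simp [Matrix.mulVec, r]
      rw [this, dotProduct_sum, Finset.sum_eq_single j]
      · rw [dotProduct_smul, hv.dual, if_pos rfl]; simp
      · intro k _ hk
        rw [dotProduct_smul, hv.dual, if_neg, smul_zero]
        intro hh; exact hk (e.injective (Subtype.ext hh)).symm
      · simp
    · intro k k'
      rw [hCS.cayleyPiece_eq hb', hCS.cayleyPiece_eq hb']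
      exact hCS.normEquiv hQ hQV k k'
  · intro k
    rw [hmap, hCS.cayleyPiece_eq hb']
    exact ⟨hCS.smooth hQV k, hCS.lattice hQ k⟩
  · omega
  · have : n < 2 * t := by omega
    have : (n : ℝ) < 2 * t := by exact_mod_cast this
    linarith

theorem stmt9_backward {n t c : ℕ} (h : t + 1 = c) (h2 : (n : ℝ) / 2 < (t : ℝ)) :
    ((n : ℝ) + 3) / 2 ≤ (c : ℝ) := by
  have h3 : (n : ℝ) < 2 * t := by linarith
  have h4 : n < 2 * t := by exact_mod_cast h3
  have h5 : n + 3 ≤ 2 * c := by omega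
  have h6 : (n : ℝ) + 3 ≤ 2 * c := by exact_mod_cast h5
  linarith


/-- A smooth full-dimensional lattice polytope `P ⊆ ℝ^n` satisfies
`cd(P) ≥ (n+3)/2` iff `P` is unimodularly equivalent to a Cayley sum
`Cayley(R_0, …, R_t)_π` of normally equivalent smooth lattice polytopes with
`t + 1 = cd(P)` and `t > n/2`. -/
theorem stmt9 {n : ℕ} (P : Set (Fin n → ℝ)) (hP : IsLatticePolytope P)
    (hfull : affineSpan ℝ P = ⊤) (hsm : IsSmoothPoly P) :
    ((n : ℝ) + 3) / 2 ≤ (codeg P : ℝ) ↔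
      ∃ (t : ℕ) (U : Matrix (Fin n) (Fin n) ℤ) (w : Fin n → ℤ)
        (A : Matrix (Fin t) (Fin n) ℤ), IsUnit U.det ∧
        IsCayleyWith (unimodMap U w '' P) A ∧
        (∀ k : Fin (t + 1),
          IsSmoothPoly (cayleyPiece A (unimodMap U w '' P) k) ∧
          IsLatticePolytope (cayleyPiece A (unimodMap U w '' P) k)) ∧
        t + 1 = codeg P ∧ (n : ℝ) / 2 < (t : ℝ) := by
  constructor
  · exact stmt9_forward P hP hfull hsm
  · rintro ⟨t, U, w, A, -, -, -, h1, h2⟩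
    exact stmt9_backward h1 h2
end
end

section
/- Let P ⊂ ℝ^n be a full-dimensional lattice polytope that is a Cayley sum Cayley(R_0, …, R_t)_π of normally equivalent lattice polytopes R_0, …, R_t (each of dimension n − t), with t > n/2. Then cd(P) = μ(P) = t + 1 ≥ (n+3)/2. -/
noncomputable section

open MeasureTheory Pointwise

/-! ### Part 1: minimizing faces -/

/-- The set of minimizers. -/
def amin {n : ℕ} (R : Set (Fin n → ℝ)) (u : (Fin n → ℝ) →ₗ[ℝ] ℝ) : Set (Fin n → ℝ) :=
  {x ∈ R | ∀ y ∈ R, u x ≤ u y}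

lemma lin_ge_convexHull {n : ℕ} {V : Set (Fin n → ℝ)} {u : (Fin n → ℝ) →ₗ[ℝ] ℝ} {c : ℝ}
    (h : ∀ v ∈ V, c ≤ u v) {y : Fin n → ℝ} (hy : y ∈ convexHull ℝ V) : c ≤ u y :=
  convexHull_min (s := V) (t := {y | c ≤ u y}) h (convex_halfSpace_ge u.isLinear c) hy

lemma lin_le_convexHull {n : ℕ} {V : Set (Fin n → ℝ)} {u : (Fin n → ℝ) →ₗ[ℝ] ℝ} {c : ℝ}
    (h : ∀ v ∈ V, u v ≤ c) {y : Fin n → ℝ} (hy : y ∈ convexHull ℝ V) : u y ≤ c :=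
  convexHull_min (s := V) (t := {y | u y ≤ c}) h (convex_halfSpace_le u.isLinear c) hy

lemma lin_gt_convexHull {n : ℕ} {V : Set (Fin n → ℝ)} {u : (Fin n → ℝ) →ₗ[ℝ] ℝ} {c : ℝ}
    (h : ∀ v ∈ V, c < u v) {y : Fin n → ℝ} (hy : y ∈ convexHull ℝ V) : c < u y :=
  convexHull_min (s := V) (t := {y | c < u y}) h (convex_halfSpace_gt u.isLinear c) hy

lemma amin_generic {n : ℕ} (V : Finset (Fin n → ℝ)) (hV : V.Nonempty)
    (g : (Fin n → ℝ) →ₗ[ℝ] ℝ) (hg : ∀ v ∈ V, ∀ w ∈ V, v ≠ w → g v ≠ g w) :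
    ∃ v ∈ V, amin (convexHull ℝ (V : Set (Fin n → ℝ))) g = {v} := by
  obtain ⟨v, hv, hmin⟩ := V.exists_min_image g hV
  refine ⟨v, hv, ?_⟩
  have hvR : v ∈ convexHull ℝ (V : Set (Fin n → ℝ)) := subset_convexHull ℝ _ hv
  ext y
  simp only [Set.mem_singleton_iff, amin, Set.mem_ofPred_eq]
  constructor
  · rintro ⟨hy, hy2⟩
    have hle := hy2 v hvR
    by_cases hne : ((V : Set (Fin n → ℝ)) \ {v}).Nonempty
    · have hins : (V : Set (Fin n → ℝ)) = insert v ((V : Set (Fin n → ℝ)) \ {v}) := by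
        simp [hv]
      rw [hins, convexHull_insert hne, mem_convexJoin] at hy
      obtain ⟨a, ha, z, hz, hyz⟩ := hy
      rw [Set.mem_singleton_iff] at ha
      subst ha
      have hgz : g a < g z := lin_gt_convexHull (u := g) (c := g a) (fun w hw =>
        lt_of_le_of_ne (hmin w hw.1) (hg a hv w hw.1 (fun h => hw.2 h.symm))) hz
      obtain ⟨p, q, hp, hq, hpq, rfl⟩ := hyz
      simp only [map_add, map_smul, smul_eq_mul] at hle
      have hp' : p = 1 - q := by linarith
      subst hp'
      have : q * (g z - g a) ≤ 0 := by nlinarith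
      have hq0 : q = 0 := by
        by_contra hne0
        have : 0 < q := lt_of_le_of_ne hq (Ne.symm hne0)
        nlinarith [mul_pos this (sub_pos.2 hgz)]
      simp [hq0]
    · have hins : (V : Set (Fin n → ℝ)) = {v} := by
        rw [Set.not_nonempty_iff_eq_empty, Set.sdiff_eq_empty] at hne
        exact Set.Subset.antisymm hne (by simpa using hv)
      rw [hins, convexHull_singleton] at hy
      exact hy
  · rintro rfl
    exact ⟨hvR, fun y hy => lin_ge_convexHull (u := g) hmin hy⟩

lemma amin_transfer {n : ℕ} {R S : Set (Fin n → ℝ)} (hRS : NormEquiv R S)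
    {g u : (Fin n → ℝ) →ₗ[ℝ] ℝ} {w w' : Fin n → ℝ}
    (hR : amin R g = {w}) (hS : amin S g = {w'}) (hu : w' ∈ amin S u) : w ∈ amin R u := by
  have hwR : w ∈ amin R g := by rw [hR]; rfl
  have hwS : w' ∈ amin S g := by rw [hS]; rfl
  have key : ∀ c : ℝ, 0 ≤ c → w ∈ amin R (g + c • u) := by
    intro c hc
    have h1 : amin S (g + c • u) = amin S g := by
      rw [hS]
      ext y
      rw [Set.mem_singleton_iff]
      constructor
      · rintro ⟨hy, hy2⟩
        have h := hy2 w' hwS.1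
        simp only [LinearMap.add_apply, LinearMap.smul_apply, smul_eq_mul] at h
        have h3 := mul_le_mul_of_nonneg_left (hu.2 y hy) hc
        have : y ∈ amin S g := ⟨hy, fun z hz => by linarith [hwS.2 z hz]⟩
        rw [hS] at this
        exact this
      · rintro rfl
        refine ⟨hwS.1, fun z hz => ?_⟩
        simp only [LinearMap.add_apply, LinearMap.smul_apply, smul_eq_mul]
        have h3 := mul_le_mul_of_nonneg_left (hu.2 z hz) hc
        linarith [hwS.2 z hz]
    have h2 : amin R (g + c • u) = amin R g := (hRS (g + c • u) g).2 h1
    rw [h2]; exact hwR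
  refine ⟨hwR.1, fun y hy => ?_⟩
  by_contra hlt
  push Not at hlt
  have hd : 0 < u w - u y := by linarith
  have hg := hwR.2 y hy
  have h := (key ((g y - g w + 1) / (u w - u y)) (div_nonneg (by linarith) hd.le)).2 y hy
  simp only [LinearMap.add_apply, LinearMap.smul_apply, smul_eq_mul] at h
  have : (g y - g w + 1) / (u w - u y) * (u w - u y) = g y - g w + 1 := by
    field_simp
  nlinarith

lemma exists_generic {n t : ℕ} (V : Fin (t + 1) → Finset (Fin n → ℝ)) :
    ∃ g : (Fin n → ℝ) →ₗ[ℝ] ℝ, ∀ k, ∀ v ∈ V k, ∀ w ∈ V k, v ≠ w → g v ≠ g w := by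
  classical
  let U := Finset.univ.biUnion V
  let D := ((U ×ˢ U).image (fun p => p.1 - p.2)).filter (· ≠ 0)
  obtain ⟨f, hf⟩ := Module.exists_dual_forall_apply_ne_zero (K := ℝ) (fun d : D => (d : Fin n → ℝ))
    (fun d => (Finset.mem_filter.1 d.2).2)
  refine ⟨f, fun k v hv w hw hne h => ?_⟩
  refine hf ⟨v - w, Finset.mem_filter.2 ⟨Finset.mem_image.2 ⟨(v, w), Finset.mem_product.2
    ⟨Finset.mem_biUnion.2 ⟨k, Finset.mem_univ _, hv⟩,
      Finset.mem_biUnion.2 ⟨k, Finset.mem_univ _, hw⟩⟩, rfl⟩, sub_ne_zero.2 hne⟩⟩ ?_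
  simp [h]

lemma exists_generic_near {n t : ℕ} (V : Fin (t + 1) → Finset (Fin n → ℝ))
    (g : (Fin n → ℝ) →ₗ[ℝ] ℝ) (hg : ∀ k, ∀ v ∈ V k, ∀ w ∈ V k, v ≠ w → g v ≠ g w)
    (u : (Fin n → ℝ) →ₗ[ℝ] ℝ) :
    ∀ᶠ ε in nhdsWithin (0 : ℝ) (Set.Ioi 0),
      ∀ k, ∀ v ∈ V k, ∀ w ∈ V k, v ≠ w → (-u + ε • g) v ≠ (-u + ε • g) w := by
  rw [Filter.eventually_all]
  intro k
  rw [Filter.eventually_all_finset]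
  intro v hv
  rw [Filter.eventually_all_finset]
  intro w hw
  by_cases hvw : v = w
  · simp [hvw]
  have hd := hg k v hv w hw hvw
  by_cases hu : u v = u w
  · filter_upwards [self_mem_nhdsWithin] with ε hε _ h
    simp only [LinearMap.add_apply, LinearMap.smul_apply, smul_eq_mul, LinearMap.neg_apply, hu,
      add_right_inj] at h
    exact hd (mul_left_cancel₀ (ne_of_gt hε) h)
  · have hc : Filter.Tendsto (fun ε : ℝ => (-u v + ε * g v) - (-u w + ε * g w))
        (nhdsWithin (0 : ℝ) (Set.Ioi 0)) (nhds ((-u v + 0 * g v) - (-u w + 0 * g w))) := by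
      apply Filter.Tendsto.mono_left _ nhdsWithin_le_nhds
      apply Continuous.tendsto (f := fun ε : ℝ => (-u v + ε * g v) - (-u w + ε * g w))
      fun_prop
    have hne : (-u v + 0 * g v) - (-u w + 0 * g w) ≠ 0 := by
      intro h; apply hu; linarith
    filter_upwards [hc.eventually_ne hne] with ε hε _ h
    apply hε
    simp only [LinearMap.add_apply, LinearMap.smul_apply, smul_eq_mul, LinearMap.neg_apply] at h
    linarith

lemma exists_selection {n t : ℕ} (V : Fin (t + 1) → Finset (Fin n → ℝ))
    (hne : ∀ k, (V k).Nonempty) (R : Fin (t + 1) → Set (Fin n → ℝ))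
    (hR : ∀ k, R k = convexHull ℝ (V k : Set (Fin n → ℝ)))
    (hNE : ∀ k l, NormEquiv (R k) (R l))
    (hdim : Module.finrank ℝ (vectorSpan ℝ (R 0)) ≤ t) :
    ∃ x : Fin (t + 1) → (Fin n → ℝ), (∀ k, x k ∈ V k) ∧
      ∀ u : (Fin n → ℝ) →ₗ[ℝ] ℝ, (∀ k, x k ∈ amin (R k) u) →
        ∀ k, ∀ y ∈ R k, u y = u (x k) := by
  classical
  obtain ⟨g0, hg0⟩ := exists_generic V
  have hsub : ∀ k, (V k : Set (Fin n → ℝ)) ⊆ R k := fun k => by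
    rw [hR k]; exact subset_convexHull ℝ _
  let gen (g : (Fin n → ℝ) →ₗ[ℝ] ℝ) : Prop := ∀ k, ∀ v ∈ V k, ∀ w ∈ V k, v ≠ w → g v ≠ g w
  have hgen : ∀ g, gen g → ∀ k, ∃ v ∈ V k, amin (R k) g = {v} := fun g hg k => by
    rw [hR k]; exact amin_generic (V k) (hne k) g (hg k)
  let W : Set (Fin n → ℝ) := {w | ∃ g, gen g ∧ amin (R 0) g = {w}}
  have hWV : W ⊆ V 0 := by
    rintro w ⟨g, hg, hw⟩
    obtain ⟨v, hv, hv2⟩ := hgen g hg 0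
    rw [hw, Set.singleton_eq_singleton_iff] at hv2
    rw [hv2]; exact hv
  obtain ⟨T, hTW, hspan, hind⟩ := exists_affineIndependent ℝ (Fin n → ℝ) W
  have hWne : W.Nonempty := by
    obtain ⟨v, hv, hv2⟩ := hgen g0 hg0 0
    exact ⟨v, g0, hg0, hv2⟩
  have hTne : T.Nonempty := by
    rw [← affineSpan_nonempty (k := ℝ), hspan, affineSpan_nonempty]; exact hWne
  have hTfin : T.Finite := (V 0).finite_toSet.subset (hTW.trans hWV)
  have : Fintype T := hTfin.fintype
  have : Nonempty T := hTne.to_subtype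
  have hcard : Fintype.card T ≤ t + 1 := by
    rw [← hind.finrank_vectorSpan_add_one, Subtype.range_coe]
    have : vectorSpan ℝ T ≤ vectorSpan ℝ (R 0) :=
      vectorSpan_mono ℝ ((hTW.trans hWV).trans (hsub 0))
    have := Submodule.finrank_mono this
    omega
  obtain ⟨e⟩ : Nonempty (T ↪ Fin (t + 1)) :=
    Function.Embedding.nonempty_of_card_le (by simpa using hcard)
  let σ : Fin (t + 1) → T := Function.invFun e
  have hσ : Function.Surjective σ := Function.invFun_surjective e.injective
  have hg : ∀ k, ∃ g, gen g ∧ amin (R 0) g = {(σ k : Fin n → ℝ)} := fun k => hTW (σ k).2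
  choose g hg1 hg2 using hg
  choose x hx1 hx2 using fun k => hgen (g k) (hg1 k) k
  refine ⟨x, hx1, fun u hu => ?_⟩
  have hT : ∀ w ∈ T, w ∈ amin (R 0) u := by
    intro w hw
    obtain ⟨k, hk⟩ := hσ ⟨w, hw⟩
    have := amin_transfer (hNE 0 k) (hg2 k) (hx2 k) (hu k)
    rwa [hk] at this
  obtain ⟨w0, hw0⟩ := hTne
  have hW : ∀ w ∈ W, u w = u w0 := by
    intro w hw
    have hw' : w ∈ affineSpan ℝ T := by rw [hspan]; exact subset_affineSpan ℝ _ hw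
    have hv : w - w0 ∈ vectorSpan ℝ T := by
      rw [← direction_affineSpan]
      exact AffineSubspace.vsub_mem_direction hw' (subset_affineSpan ℝ _ hw0)
    have hle : vectorSpan ℝ T ≤ LinearMap.ker u := by
      rw [vectorSpan_def, Submodule.span_le]
      rintro _ ⟨a, ha, b, hb, rfl⟩
      have h1 := (hT a ha).2 b (hT b hb).1
      have h2 := (hT b hb).2 a (hT a ha).1
      simp only [SetLike.mem_coe, LinearMap.mem_ker, vsub_eq_sub, map_sub]
      linarith
    have := hle hv
    rw [LinearMap.mem_ker, map_sub] at this
    linarith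
  have hle : ∀ v ∈ V 0, u v ≤ u w0 := by
    intro v hv
    by_contra hlt
    push Not at hlt
    have h2 : ∀ᶠ ε in nhdsWithin (0 : ℝ) (Set.Ioi 0), ∀ w ∈ V 0,
        ε * (g0 v - g0 w) < u v - u w0 := by
      rw [Filter.eventually_all_finset]
      intro w _
      have hc : Filter.Tendsto (fun ε : ℝ => ε * (g0 v - g0 w))
          (nhdsWithin (0 : ℝ) (Set.Ioi 0)) (nhds (0 * (g0 v - g0 w))) := by
        apply Filter.Tendsto.mono_left _ nhdsWithin_le_nhds
        apply Continuous.tendsto (f := fun ε : ℝ => ε * (g0 v - g0 w))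
        fun_prop
      exact hc.eventually_lt_const (by linarith)
    obtain ⟨ε, h1, h2⟩ := ((exists_generic_near V g0 hg0 u).and h2).exists
    obtain ⟨w, hw, hw2⟩ := hgen _ h1 0
    have hu2 := hW w ⟨_, h1, hw2⟩
    have hmem : w ∈ amin (R 0) (-u + ε • g0) := by rw [hw2]; rfl
    have h3 := hmem.2 v (hsub 0 hv)
    simp only [LinearMap.add_apply, LinearMap.smul_apply, smul_eq_mul, LinearMap.neg_apply] at h3
    have h4 := h2 w hw
    linarith
  have hR0 : amin (R 0) u = amin (R 0) 0 := by
    ext y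
    simp only [amin, Set.mem_ofPred_eq, LinearMap.zero_apply, le_refl, implies_true, and_true,
      and_iff_left_iff_imp]
    intro hy z hz
    have h1 : u y ≤ u w0 := by
      rw [hR 0] at hy
      exact lin_le_convexHull (u := u) hle hy
    exact h1.trans ((hT w0 hw0).2 z hz)
  intro k y hy
  have hk : amin (R k) u = amin (R k) 0 := (hNE 0 k u 0).1 hR0
  have hy' : y ∈ amin (R k) u := by
    rw [hk]; exact ⟨hy, by simp⟩
  exact le_antisymm (hy'.2 _ (hu k).1) ((hu k).2 y hy)

/-! ### Part 2: lattice facts and the facets over the simplex facets -/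

/-- Pairing with an integer vector as a linear map. -/
def ilin {n : ℕ} (a : Fin n → ℤ) : (Fin n → ℝ) →ₗ[ℝ] ℝ where
  toFun := iprod a
  map_add' x y := by simp [iprod, mul_add, Finset.sum_add_distrib]
  map_smul' c x := by
    simp only [iprod, Pi.smul_apply, smul_eq_mul, RingHom.id_apply, Finset.mul_sum]
    exact Finset.sum_congr rfl fun i _ => by ring

lemma ilin_apply {n : ℕ} (a : Fin n → ℤ) (x : Fin n → ℝ) : ilin a x = iprod a x := rfl

lemma ilin_ne_zero {n : ℕ} {a : Fin n → ℤ} (ha : a ≠ 0) : ilin a ≠ 0 := by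
  intro h
  apply ha
  funext i
  have := LinearMap.congr_fun h (Pi.single i 1)
  simp only [ilin_apply, iprod, Pi.single_apply, mul_ite, mul_one, mul_zero,
    Finset.sum_ite_eq', Finset.mem_univ, if_true, LinearMap.zero_apply] at this
  exact_mod_cast this

lemma iprod_int {n : ℕ} (a : Fin n → ℤ) {x : Fin n → ℝ} (hx : IsLatticePt x) :
    ∃ z : ℤ, iprod a x = z := by
  choose z hz using hx
  exact ⟨∑ i, a i * z i, by simp [iprod, hz]⟩

lemma interior_strict {n : ℕ} {S : Set (Fin n → ℝ)} {u : (Fin n → ℝ) →ₗ[ℝ] ℝ} (hu : u ≠ 0)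
    {c : ℝ} (h : ∀ y ∈ S, c ≤ u y) {x : Fin n → ℝ} (hx : x ∈ interior S) : c < u x := by
  obtain ⟨d, hd⟩ : ∃ d, u d < 0 := by
    by_contra hcon
    push Not at hcon
    apply hu
    apply LinearMap.ext
    intro y
    have h1 := hcon y
    have h2 := hcon (-y)
    rw [map_neg] at h2
    exact le_antisymm (by simpa using h2) (by simpa using h1)
  have hc : Filter.Tendsto (fun ε : ℝ => x + ε • d)
      (nhdsWithin (0 : ℝ) (Set.Ioi 0)) (nhds (x + (0 : ℝ) • d)) := by
    apply Filter.Tendsto.mono_left _ nhdsWithin_le_nhds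
    apply Continuous.tendsto (f := fun ε : ℝ => x + ε • d)
    fun_prop
  have hmem : interior S ∈ nhds (x + (0 : ℝ) • d) := by
    simpa using isOpen_interior.mem_nhds hx
  obtain ⟨ε, h1, h2⟩ := ((hc.eventually hmem).and self_mem_nhdsWithin).exists
  have h3 := h _ (interior_subset h1)
  rw [map_add, map_smul, smul_eq_mul] at h3
  nlinarith [mul_pos_of_neg_of_neg hd (neg_neg_of_pos h2)]

lemma interior_smul_iprod {n : ℕ} {P : Set (Fin n → ℝ)} {a : Fin n → ℤ} (ha : a ≠ 0) {b : ℤ}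
    (h : ∀ x ∈ P, (b : ℝ) ≤ iprod a x) {s : ℕ} {x : Fin n → ℝ}
    (hx : x ∈ interior ((s : ℝ) • P)) (hxl : IsLatticePt x) :
    (s : ℝ) * b + 1 ≤ iprod a x := by
  have h1 : (s : ℝ) * b < ilin a x := by
    refine interior_strict (ilin_ne_zero ha) ?_ hx
    rintro _ ⟨y, hy, rfl⟩
    simp only [map_smul, smul_eq_mul]
    exact mul_le_mul_of_nonneg_left (h y hy) (Nat.cast_nonneg s)
  obtain ⟨z, hz⟩ := iprod_int a hxl
  rw [ilin_apply, hz] at h1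
  rw [hz]
  have : (s : ℤ) * b < z := by exact_mod_cast h1
  exact_mod_cast this

/-- Normals of the facets lying over the facets of the simplex. -/
def cn {n t : ℕ} (A : Matrix (Fin t) (Fin n) ℤ) : Fin (t + 1) → Fin n → ℤ :=
  Fin.cons (fun i => -∑ j, A j i) (fun j => A j)

/-- Right-hand sides of the facets lying over the facets of the simplex. -/
def cb (t : ℕ) : Fin (t + 1) → ℤ := Fin.cons (-1) (fun _ => 0)

lemma iprod_cn_succ {n t : ℕ} (A : Matrix (Fin t) (Fin n) ℤ) (j : Fin t) (x : Fin n → ℝ) :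
    iprod (cn A j.succ) x = matMap A x j := by
  simp [iprod, cn, matMap]

lemma iprod_cn_zero {n t : ℕ} (A : Matrix (Fin t) (Fin n) ℤ) (x : Fin n → ℝ) :
    iprod (cn A 0) x = -∑ j, matMap A x j := by
  simp only [iprod, cn, matMap, Fin.cons_zero]
  rw [Finset.sum_comm, ← Finset.sum_neg_distrib]
  refine Finset.sum_congr rfl fun i _ => ?_
  push_cast
  rw [neg_mul, Finset.sum_mul]

lemma sum_iprod_cn {n t : ℕ} (A : Matrix (Fin t) (Fin n) ℤ) (x : Fin n → ℝ) :
    ∑ k, iprod (cn A k) x = 0 := by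
  rw [Fin.sum_univ_succ, iprod_cn_zero]
  simp [iprod_cn_succ]

lemma sum_cb (t : ℕ) : ∑ k, (cb t k : ℝ) = -1 := by
  rw [Fin.sum_univ_succ]
  simp [cb]

lemma iprod_cn_vert {n t : ℕ} (A : Matrix (Fin t) (Fin n) ℤ) {x : Fin n → ℝ} {l : Fin (t + 1)}
    (h : matMap A x = stdSimplexVert t l) (k : Fin (t + 1)) :
    iprod (cn A k) x = cb t k + if k = l then 1 else 0 := by
  have hs : ∀ j : Fin t, iprod (cn A j.succ) x = cb t j.succ + if j.succ = l then 1 else 0 := by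
    intro j
    rw [iprod_cn_succ, h]
    simp only [stdSimplexVert, cb, Fin.cons_succ, Int.cast_zero, zero_add]
    congr 1
    rw [Fin.ext_iff, Fin.val_succ]; exact propext eq_comm
  refine Fin.cases ?_ hs k
  have h1 := sum_iprod_cn A x
  have h2 := sum_cb t
  have h3 : ∑ k : Fin (t + 1), (if k = l then (1 : ℝ) else 0) = 1 := by simp
  rw [Fin.sum_univ_succ] at h1 h2 h3
  simp only [hs, Finset.sum_add_distrib] at h1
  linarith

lemma matMap_eq_of_iprod {n t : ℕ} (A : Matrix (Fin t) (Fin n) ℤ) {x : Fin n → ℝ}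
    {l : Fin (t + 1)}
    (h : ∀ k, iprod (cn A k) x = cb t k + if k = l then 1 else 0) :
    matMap A x = stdSimplexVert t l := by
  funext j
  rw [← iprod_cn_succ, h]
  simp only [stdSimplexVert, cb, Fin.cons_succ, Int.cast_zero, zero_add]
  congr 1
  rw [Fin.ext_iff, Fin.val_succ]; exact propext eq_comm

lemma simplex_ge {t : ℕ} {y : Fin t → ℝ} (hy : y ∈ unimodSimplex t) :
    (∀ j, 0 ≤ y j) ∧ ∑ j, y j ≤ 1 := by
  have hc : Convex ℝ {y : Fin t → ℝ | (∀ j, 0 ≤ y j) ∧ ∑ j, y j ≤ 1} := by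
    rintro a ⟨ha, ha'⟩ b ⟨hb, hb'⟩ p q hp hq hpq
    refine ⟨fun j => ?_, ?_⟩
    · have := ha j
      have := hb j
      simp only [Pi.add_apply, Pi.smul_apply, smul_eq_mul]
      positivity
    · simp only [Pi.add_apply, Pi.smul_apply, smul_eq_mul, Finset.sum_add_distrib,
        ← Finset.mul_sum]
      nlinarith
  refine convexHull_min ?_ hc hy
  rintro _ ⟨k, rfl⟩
  refine ⟨fun j => ?_, ?_⟩
  · unfold stdSimplexVert
    split_ifs <;> simp
  · refine Fin.cases ?_ (fun i => ?_) k
    · simp [stdSimplexVert]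
    · have : ∀ j : Fin t, stdSimplexVert t i.succ j = if i = j then 1 else 0 := by
        intro j
        simp only [stdSimplexVert, Fin.val_succ, add_left_inj, Fin.ext_iff]
      simp [this]

lemma iprod_cn_ge {n t : ℕ} (A : Matrix (Fin t) (Fin n) ℤ) {P : Set (Fin n → ℝ)}
    (hA : matMap A '' P = unimodSimplex t) {x : Fin n → ℝ} (hx : x ∈ P) (k : Fin (t + 1)) :
    (cb t k : ℝ) ≤ iprod (cn A k) x := by
  have h := simplex_ge (y := matMap A x) (by rw [← hA]; exact ⟨x, hx, rfl⟩)
  refine Fin.cases ?_ (fun j => ?_) k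
  · rw [iprod_cn_zero]
    simp only [cb, Fin.cons_zero]
    push_cast
    linarith [h.2]
  · rw [iprod_cn_succ]
    simpa [cb] using h.1 j

lemma lattice_mem_piece {n t : ℕ} (A : Matrix (Fin t) (Fin n) ℤ) {P : Set (Fin n → ℝ)}
    (hA : matMap A '' P = unimodSimplex t) {x : Fin n → ℝ} (hx : x ∈ P) (hl : IsLatticePt x) :
    ∃ l, x ∈ cayleyPiece A P l := by
  choose z hz using fun k => iprod_int (cn A k) hl
  have hnn : ∀ k, 0 ≤ z k - cb t k := by
    intro k
    have := iprod_cn_ge A hA hx k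
    rw [hz] at this
    have : cb t k ≤ z k := by exact_mod_cast this
    omega
  have hsum : ∑ k, (z k - cb t k) = 1 := by
    have h1 := sum_iprod_cn A x
    have h2 := sum_cb t
    simp only [hz] at h1
    rw [Finset.sum_sub_distrib]
    have h1' : ∑ k, z k = 0 := by exact_mod_cast h1
    have h2' : ∑ k, cb t k = -1 := by exact_mod_cast h2
    omega
  obtain ⟨l, hl⟩ : ∃ l, 0 < z l - cb t l := by
    by_contra hcon
    push Not at hcon
    have : ∑ k, (z k - cb t k) ≤ 0 := Finset.sum_nonpos fun k _ => hcon k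
    omega
  refine ⟨l, hx, matMap_eq_of_iprod A fun k => ?_⟩
  rw [hz]
  have hspl := Finset.add_sum_erase Finset.univ (fun k => z k - cb t k) (Finset.mem_univ l)
  have hr : 0 ≤ ∑ k ∈ Finset.univ.erase l, (z k - cb t k) := Finset.sum_nonneg fun k _ => hnn k
  by_cases hk : k = l
  · subst hk
    have : z k = cb t k + 1 := by omega
    simp [this]
  · have h4 : z k - cb t k ≤ ∑ k ∈ Finset.univ.erase l, (z k - cb t k) :=
      Finset.single_le_sum (f := fun k => z k - cb t k) (fun k _ => hnn k)
        (Finset.mem_erase.2 ⟨hk, Finset.mem_univ k⟩)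
    have h5 := hnn k
    have : z k = cb t k := by omega
    simp [hk, this]

/-- `matMap` as a linear map. -/
def mlin {n t : ℕ} (A : Matrix (Fin t) (Fin n) ℤ) : (Fin n → ℝ) →ₗ[ℝ] (Fin t → ℝ) :=
  LinearMap.pi fun j => ilin (A j)

lemma mlin_apply {n t : ℕ} (A : Matrix (Fin t) (Fin n) ℤ) (x : Fin n → ℝ) :
    mlin A x = matMap A x := rfl

lemma mlin_surj {n t : ℕ} (A : Matrix (Fin t) (Fin n) ℤ)
    (h : ∀ y : Fin t → ℤ, ∃ x : Fin n → ℤ, A.mulVec x = y) :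
    LinearMap.range (mlin A) = ⊤ := by
  rw [eq_top_iff]
  intro y _
  rw [← Finset.univ_sum_single y]
  refine Submodule.sum_mem _ fun j _ => ?_
  obtain ⟨x, hx⟩ := h (Pi.single j 1)
  refine ⟨y j • fun i => (x i : ℝ), ?_⟩
  rw [map_smul, mlin_apply]
  funext i
  have h1 := congrFun hx i
  have h2 : matMap A (fun i => (x i : ℝ)) i = ((A.mulVec x i : ℤ) : ℝ) := by
    simp [matMap, Matrix.mulVec, dotProduct]
  rw [Pi.smul_apply, h2, h1]
  simp only [Pi.single_apply, smul_eq_mul]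
  split_ifs <;> simp

lemma vectorSpan_piece {n t : ℕ} (A : Matrix (Fin t) (Fin n) ℤ) (P : Set (Fin n → ℝ))
    (h : ∀ y : Fin t → ℤ, ∃ x : Fin n → ℤ, A.mulVec x = y) (k : Fin (t + 1))
    (hdim : fdim (cayleyPiece A P k) = n - t) :
    vectorSpan ℝ (cayleyPiece A P k) = LinearMap.ker (mlin A) := by
  apply Submodule.eq_of_le_of_finrank_eq
  · rw [vectorSpan_def, Submodule.span_le]
    rintro _ ⟨a, ha, b, hb, rfl⟩
    simp only [SetLike.mem_coe, LinearMap.mem_ker, vsub_eq_sub, map_sub, mlin_apply]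
    rw [ha.2, hb.2, sub_self]
  · have h1 := LinearMap.finrank_range_add_finrank_ker (mlin A)
    rw [mlin_surj A h, finrank_top] at h1
    simp only [Module.finrank_fin_fun] at h1
    unfold fdim at hdim
    omega

lemma facet_cn {n t : ℕ} (P : Set (Fin n → ℝ)) (hP : IsLatticePolytope P)
    (hfull : affineSpan ℝ P = ⊤) (A : Matrix (Fin t) (Fin n) ℤ)
    (hC : IsCayleyWith P A)
    (hlat : ∀ k : Fin (t + 1), ∃ x ∈ cayleyPiece A P k, IsLatticePt x)
    (hdim : ∀ k : Fin (t + 1), fdim (cayleyPiece A P k) = n - t)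
    (ht : 0 < t) (k : Fin (t + 1)) : IsFacetIneq P (cn A k) (cb t k) := by
  obtain ⟨hsurj, hA, -⟩ := hC
  have : Nontrivial (Fin (t + 1)) := Fin.nontrivial_iff_two_le.2 (by omega)
  obtain ⟨l, hl⟩ := exists_ne k
  obtain ⟨x, hx, hxl⟩ := hlat k
  obtain ⟨y, hy, hyl⟩ := hlat l
  have hxk := iprod_cn_vert A hx.2 k
  have hyk := iprod_cn_vert A hy.2 k
  rw [if_pos rfl] at hxk
  rw [if_neg hl.symm, add_zero] at hyk
  have hprim : IsPrimitive (cn A k) := by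
    choose p hp using hxl
    choose q hq using hyl
    have h1 : ∑ i, cn A k i * (p i - q i) = 1 := by
      have : iprod (cn A k) x - iprod (cn A k) y = 1 := by rw [hxk, hyk]; ring
      simp only [iprod, hp, hq, ← Finset.sum_sub_distrib, ← mul_sub] at this
      exact_mod_cast this
    refine ⟨fun h0 => ?_, fun d hd => ?_⟩
    · simp [h0] at h1
    · rw [isUnit_iff_dvd_one, ← h1]
      exact Finset.dvd_sum fun i _ => Dvd.dvd.mul_right (hd i) _
  refine ⟨hprim, fun z hz => iprod_cn_ge A hA hz k, ⟨y, hy.1, hyk⟩, ?_⟩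
  set F := {x ∈ P | iprod (cn A k) x = cb t k} with hF
  have hyF : y ∈ F := ⟨hy.1, hyk⟩
  have hker : vectorSpan ℝ F ≤ LinearMap.ker (ilin (cn A k)) := by
    rw [vectorSpan_def, Submodule.span_le]
    rintro _ ⟨a, ha, b, hb, rfl⟩
    simp only [SetLike.mem_coe, LinearMap.mem_ker, vsub_eq_sub, map_sub, ilin_apply]
    rw [ha.2, hb.2, sub_self]
  have hsubF : cayleyPiece A P l ⊆ F := by
    intro z hz
    refine ⟨hz.1, ?_⟩
    rw [iprod_cn_vert A hz.2 k, if_neg hl.symm, add_zero]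
  have hkF : LinearMap.ker (mlin A) ≤ vectorSpan ℝ F := by
    rw [← vectorSpan_piece A P hsurj l (hdim l)]
    exact vectorSpan_mono ℝ hsubF
  have htop : vectorSpan ℝ F ⊔ Submodule.span ℝ {x - y} = ⊤ := by
    have hPtop : vectorSpan ℝ P = ⊤ := by
      rw [← direction_affineSpan, hfull, AffineSubspace.direction_top]
    obtain ⟨V, hVl, hV⟩ := hP
    have hVspan : vectorSpan ℝ (V : Set (Fin n → ℝ)) = ⊤ := by
      rw [← hPtop, hV, ← direction_affineSpan, ← direction_affineSpan, affineSpan_convexHull]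
    have hmem : ∀ v ∈ V, v - y ∈ vectorSpan ℝ F ⊔ Submodule.span ℝ {x - y} := by
      intro v hv
      have hvP : v ∈ P := by rw [hV]; exact subset_convexHull ℝ _ hv
      obtain ⟨m, hm⟩ := lattice_mem_piece A hA hvP (hVl v hv)
      by_cases hmk : m = k
      · subst hmk
        have h1 : v - x ∈ LinearMap.ker (mlin A) := by
          rw [LinearMap.mem_ker, map_sub, mlin_apply, mlin_apply, hm.2, hx.2, sub_self]
        have : v - y = (v - x) + (x - y) := by abel
        rw [this]
        exact Submodule.add_mem_sup (hkF h1) (Submodule.mem_span_singleton_self _)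
      · apply Submodule.mem_sup_left
        refine vsub_mem_vectorSpan ℝ ⟨hvP, ?_⟩ hyF
        rw [iprod_cn_vert A hm.2 k, if_neg (Ne.symm hmk), add_zero]
    rw [eq_top_iff, ← hVspan, vectorSpan_def, Submodule.span_le]
    rintro _ ⟨a, ha, b, hb, rfl⟩
    have : a -ᵥ b = (a - y) - (b - y) := by rw [vsub_eq_sub]; abel
    simp only [SetLike.mem_coe]
    rw [this]
    exact Submodule.sub_mem _ (hmem a ha) (hmem b hb)
  have h1 := Submodule.finrank_add_le_finrank_add_finrank (vectorSpan ℝ F)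
    (Submodule.span ℝ {x - y})
  rw [htop, finrank_top, Module.finrank_fin_fun] at h1
  have h2 := finrank_span_le_card (R := ℝ) ({x - y} : Set (Fin n → ℝ))
  simp only [Set.toFinset_singleton, Finset.card_singleton] at h2
  have h3 := Submodule.finrank_mono hker
  have h4 : Module.finrank ℝ (LinearMap.ker (ilin (cn A k))) < n := by
    have := Submodule.finrank_lt (s := LinearMap.ker (ilin (cn A k)))
      (fun h => ilin_ne_zero hprim.1 (LinearMap.ker_eq_top.1 h))
    simpa using this
  omega

/-- If a full-dimensional lattice polytope `P ⊆ ℝ^n` is a Cayley sum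
`Cayley(R_0, …, R_t)_π` of normally equivalent lattice polytopes each of dimension `n - t`,
with `t > n/2`, then `cd(P) = μ(P) = t + 1 ≥ (n+3)/2`. -/
theorem stmt11 {n t : ℕ} (P : Set (Fin n → ℝ)) (hP : IsLatticePolytope P)
    (hfull : affineSpan ℝ P = ⊤) (A : Matrix (Fin t) (Fin n) ℤ)
    (hC : IsCayleyWith P A)
    (hpieces : ∀ k : Fin (t + 1), IsLatticePolytope (cayleyPiece A P k))
    (hdim : ∀ k : Fin (t + 1), fdim (cayleyPiece A P k) = n - t)
    (ht : (n : ℝ) / 2 < (t : ℝ)) :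
    codeg P = t + 1 ∧ (sSup (muSet P))⁻¹ = (t : ℝ) + 1 ∧
    ((n : ℝ) + 3) / 2 ≤ (t : ℝ) + 1 := by
  have htn : n < 2 * t := by
    have : (n : ℝ) < 2 * t := by linarith
    exact_mod_cast this
  have ht0 : 0 < t := by omega
  have hA := hC.2.1
  have hne : ∀ k, (cayleyPiece A P k).Nonempty := by
    intro k
    have : stdSimplexVert t k ∈ matMap A '' P := by
      rw [hA]; exact subset_convexHull ℝ _ ⟨k, rfl⟩
    obtain ⟨x, hx, hxk⟩ := this
    exact ⟨x, hx, hxk⟩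
  choose V hVl hV using hpieces
  have hVne : ∀ k, (V k).Nonempty := by
    intro k
    have := hne k
    rw [hV k, convexHull_nonempty_iff] at this
    exact_mod_cast this
  have hVR : ∀ k, ∀ v ∈ V k, v ∈ cayleyPiece A P k := fun k v hv => by
    rw [hV k]; exact subset_convexHull ℝ _ hv
  have hlat : ∀ k : Fin (t + 1), ∃ x ∈ cayleyPiece A P k, IsLatticePt x := fun k => by
    obtain ⟨v, hv⟩ := hVne k
    exact ⟨v, hVR k v hv, hVl k v hv⟩
  have hfacet := facet_cn P hP hfull A hC hlat hdim ht0
  have hconv : Convex ℝ P := by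
    obtain ⟨W, -, hW⟩ := hP
    rw [hW]; exact convex_convexHull ℝ _
  -- the interior lattice point
  have hIntPt : HasInteriorLatticePt P (t + 1) := by
    obtain ⟨x, hxV, hx⟩ := exists_selection V hVne (cayleyPiece A P) hV hC.2.2 (by
      have := hdim 0
      unfold fdim at this
      omega)
    have hxP : ∀ k, x k ∈ P := fun k => (hVR k _ (hxV k)).1
    refine ⟨∑ k, x k, ?_, ?_⟩
    swap
    · intro i
      choose z hz using fun k => hVl k _ (hxV k) i
      exact ⟨∑ k, z k, by simp [Finset.sum_apply, hz]⟩
    have ht1 : ((t + 1 : ℕ) : ℝ) ≠ 0 := by positivity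
    by_contra hnot
    have hintP : (interior P).Nonempty := hconv.interior_nonempty_iff_affineSpan_eq_top.2 hfull
    obtain ⟨f, hf⟩ := geometric_hahn_banach_point_open
      (Convex.interior (hconv.smul ((t + 1 : ℕ) : ℝ))) isOpen_interior hnot
    rw [interior_smul₀ ht1] at hf
    have hf1 : ∀ y ∈ interior P, f (∑ k, x k) ≤ (t + 1 : ℕ) * f y := by
      intro y hy
      have := hf _ (Set.smul_mem_smul_set hy)
      rw [map_smul, smul_eq_mul] at this
      exact this.le
    have hf2 : ∀ y ∈ P, f (∑ k, x k) ≤ (t + 1 : ℕ) * f y := by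
      intro y hy
      have hcl : IsClosed {y : Fin n → ℝ | f (∑ k, x k) ≤ (t + 1 : ℕ) * f y} :=
        isClosed_le continuous_const (by fun_prop)
      have hycl : y ∈ closure (interior P) := by
        rw [hconv.closure_interior_eq_closure_of_nonempty_interior hintP]
        exact subset_closure hy
      exact closure_minimal (fun z hz => hf1 z hz) hcl hycl
    have hsumf : f (∑ k, x k) = ∑ k, f (x k) := map_sum f _ _
    -- all the chosen points minimize `f` on `P`
    have hmin : ∀ k, ∀ y ∈ P, f (x k) ≤ f y := by
      obtain ⟨k0, -, hk0⟩ := Finset.exists_min_image Finset.univ (fun k => f (x k))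
        Finset.univ_nonempty
      have hk : ∀ k, f (x k) = f (x k0) := by
        intro k
        have h1 := hf2 _ (hxP k0)
        rw [hsumf, ← Finset.add_sum_erase Finset.univ _ (Finset.mem_univ k)] at h1
        have h2 : ∑ i ∈ Finset.univ.erase k, f (x k0) ≤ ∑ i ∈ Finset.univ.erase k, f (x i) :=
          Finset.sum_le_sum fun i _ => hk0 i (Finset.mem_univ i)
        rw [Finset.sum_const, Finset.card_erase_of_mem (Finset.mem_univ k), Finset.card_univ,
          Fintype.card_fin, Nat.add_sub_cancel, nsmul_eq_mul] at h2
        push_cast at h1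
        exact le_antisymm (by linarith) (hk0 k (Finset.mem_univ k))
      intro k y hy
      have h1 := hf2 y hy
      rw [hsumf, Finset.sum_congr rfl fun i _ => (hk i).trans (hk k).symm, Finset.sum_const,
        Finset.card_univ, Fintype.card_fin, nsmul_eq_mul] at h1
      exact le_of_mul_le_mul_left h1 (by positivity)
    have hconst := hx (f : (Fin n → ℝ) →ₗ[ℝ] ℝ) (fun k =>
      ⟨hVR k _ (hxV k), fun y hy => hmin k y hy.1⟩)
    have hle : ∀ y ∈ P, f y ≤ f (x 0) := by
      obtain ⟨W, hWl, hW⟩ := hP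
      intro y hy
      rw [hW] at hy
      refine lin_le_convexHull (u := (f : (Fin n → ℝ) →ₗ[ℝ] ℝ)) (fun w hw => ?_) hy
      have hwP : w ∈ P := by rw [hW]; exact subset_convexHull ℝ _ hw
      obtain ⟨l, hl⟩ := lattice_mem_piece A hA hwP (hWl w hw)
      rw [hconst l w hl]
      exact hmin l _ (hxP 0)
    obtain ⟨p, hp⟩ := hintP
    have h1 := hf _ (Set.smul_mem_smul_set hp)
    have h2 : f (∑ k, x k) = (t + 1 : ℕ) * f (x 0) := by
      rw [hsumf, Finset.sum_congr rfl fun i _ =>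
        le_antisymm (hmin i _ (hxP 0)) (hmin 0 _ (hxP i)), Finset.sum_const,
        Finset.card_univ, Fintype.card_fin, nsmul_eq_mul]
    rw [h2, map_smul, smul_eq_mul] at h1
    have := mul_le_mul_of_nonneg_left (hle p (interior_subset hp))
      (Nat.cast_nonneg (α := ℝ) (t + 1))
    linarith
  refine ⟨?_, ?_, ?_⟩
  · apply le_antisymm
    · exact Nat.sInf_le ⟨Nat.succ_pos t, hIntPt⟩
    · refine le_csInf ⟨t + 1, Nat.succ_pos t, hIntPt⟩ ?_
      rintro s ⟨-, x, hx, hxl⟩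
      have h1 : ∀ k, (s : ℝ) * cb t k + 1 ≤ iprod (cn A k) x := fun k =>
        interior_smul_iprod (hfacet k).1.1 (hfacet k).2.1 hx hxl
      have h2 : ∑ k, ((s : ℝ) * cb t k + 1) ≤ ∑ k, iprod (cn A k) x :=
        Finset.sum_le_sum fun k _ => h1 k
      rw [sum_iprod_cn, Finset.sum_add_distrib, ← Finset.mul_sum, sum_cb] at h2
      simp only [Finset.sum_const, Finset.card_univ, Fintype.card_fin, nsmul_eq_mul] at h2
      have : ((t + 1 : ℕ) : ℝ) ≤ s := by linarith
      exact_mod_cast this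
  · have hgr : IsGreatest (muSet P) (((t : ℝ) + 1)⁻¹) := by
      constructor
      · refine ⟨by positivity, ?_⟩
        obtain ⟨x, hx, hxl⟩ := hIntPt
        refine ⟨((t : ℝ) + 1)⁻¹ • x, fun a b hab => ?_⟩
        obtain ⟨z, hz⟩ : ∃ z : ℤ, b = z := by
          obtain ⟨hprim, hge, ⟨y, hy, hyb⟩, -⟩ := hab
          obtain ⟨W, hWl, hW⟩ := hP
          have hWne : W.Nonempty := by
            rw [hW] at hy
            have : (convexHull ℝ (W : Set (Fin n → ℝ))).Nonempty := ⟨y, hy⟩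
            rw [convexHull_nonempty_iff] at this
            exact_mod_cast this
          obtain ⟨w, hw, hmin⟩ := W.exists_min_image (iprod a) hWne
          obtain ⟨z, hz⟩ := iprod_int a (hWl w hw)
          refine ⟨z, ?_⟩
          rw [← hz]
          apply le_antisymm
          · exact hge w (by rw [hW]; exact subset_convexHull ℝ _ hw)
          · rw [← hyb]
            rw [hW] at hy
            exact lin_ge_convexHull (u := ilin a) hmin hy
        subst hz
        have h1 := interior_smul_iprod hab.1.1 hab.2.1 hx hxl
        rw [← ilin_apply, map_smul, smul_eq_mul, ilin_apply]
        push_cast at h1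
        have hpos : (0 : ℝ) < (t : ℝ) + 1 := by positivity
        have h2 := mul_le_mul_of_nonneg_left h1 (inv_pos.2 hpos).le
        rw [mul_add, ← mul_assoc, inv_mul_cancel₀ hpos.ne', one_mul, mul_one] at h2
        exact h2
      · rintro s ⟨-, y, hy⟩
        have h2 : ∑ k, ((cb t k : ℝ) + s) ≤ ∑ k, iprod (cn A k) y :=
          Finset.sum_le_sum fun k _ => hy _ _ (hfacet k)
        rw [sum_iprod_cn, Finset.sum_add_distrib, sum_cb] at h2
        simp only [Finset.sum_const, Finset.card_univ, Fintype.card_fin, nsmul_eq_mul] at h2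
        push_cast at h2
        rw [← one_div, le_div_iff₀ (by positivity)]
        linarith
    rw [hgr.csSup_eq, inv_inv]
  · have : ((n + 1 : ℕ) : ℝ) ≤ ((2 * t : ℕ) : ℝ) := by exact_mod_cast htn
    push_cast at this
    linarith
end
end
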